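/- There exist constants ε₀ = ε₀(n, λ, V₀) > 0 and r₀ = r₀(n, λ, Λ, V₀) > 0 such that if the smallness condition holds with parameter ε₀, then for every ancient solution u of ∂ₜu = Lu on ℝ⁻ × Ω vanishing on ℝ⁻ × ∂Ω, every r > 1, and every positive integer k, one has ∫_{Q_{r + k r₀}} u² ≥ e^k ∫_{Q_r} u². -/

import Mathlib

/-!
Put `κ = λ / (4 n ρ²)`, where `ρⁿ = 2 V₀`. Testing the equation with `φ(x₀)² u`, for a cutoff `φ` in
the axial variable, and absorbing the cross terms into the elliptic term gives a bound for
`d/dt ∫ φ² u² / 2` by `-(λ/2) ∫ φ² |∇u|²` plus lower order terms in `u²`. The Poincaré inequality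
on the strip controls `∫ φ² u²` by the gradient term: if `ε₀ ((n+1)/λ + 1) ≤ κ / 8`, then
`d/dt ∫ φ² u² / 2 ≤ -(κ/8) ∫ φ² u² + C₂ ∫ φ'² u²` with `C₂ = 4 (n+1) Λ² / λ`
(`fixed_time`). Integrating over `[s, 0]` (`energy_integrated`), averaging over the initial time
`s ∈ [-(r+r₀)², -r²]`, an interval of length at least `r₀`, and using `|φ'| ≤ M / r₀` gives
`(κ/8) ∫_{Q_r} u² ≤ ((1 + C₂ M²) / r₀) ∫_{Q_{r+r₀}} u²`. So a large `r₀` produces the factor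
`e` (`one_step`), and the theorem follows by induction on `k`.

The Poincaré constant depends only on `n` and `V₀` (`poincare`): the cube `[0, ρ]ⁿ` has volume
`2 V₀`, so for every point of the strip translations by at least half of the cube lead out of the
strip, where the function vanishes.

Nothing is assumed about the regularity of `∂Ω₀`, of `∇u` at the boundary, of `∂ₜu` jointly in
`(t, x)`, or about the measurability of `b` and `c`. Two devices replace these.
* The function `s² / 2` is replaced by a `C²` function `Hfun δ` vanishing for `|s| ≤ δ`. As `u`
  vanishes on the boundary, `{|u| ≥ δ}` meets each slab `|x₀| ≤ R` in a compact subset of the strip,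
  so all integrations by parts take place there. The error is `O(δ²)` and `δ → 0` at the end.
* The comparison principle with an explicit barrier shows that for each `t₀` and each compact `K` in
  the strip `|u(t, x) - u(t₀, x)| ≤ C (t - t₀)` for `x ∈ K`, `t₀ ≤ t ≤ 0` (`time_lipschitz`).
  Dominated convergence then gives the *right* derivative of the energy (`energy_hasDeriv`), which
  is enough for the integrated inequality; integrability of the limit comes with it.
-/

open MeasureTheory Set Filter

noncomputable section

/-- Partial derivative of `f` in the `i`-th coordinate direction. -/
def pd {n : ℕ} (i : Fin (n + 1)) (f : (Fin (n + 1) → ℝ) → ℝ) (x : Fin (n + 1) → ℝ) : ℝ :=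
  fderiv ℝ f x (Pi.single i 1)

/-- The divergence-form operator `L u = ∂ᵢ(aᶦʲ ∂ⱼ u) + bⁱ ∂ᵢ u + c u`. -/
def Lop {n : ℕ} (a : (Fin (n + 1) → ℝ) → Fin (n + 1) → Fin (n + 1) → ℝ)
    (b : (Fin (n + 1) → ℝ) → Fin (n + 1) → ℝ) (c : (Fin (n + 1) → ℝ) → ℝ)
    (f : (Fin (n + 1) → ℝ) → ℝ) (x : Fin (n + 1) → ℝ) : ℝ :=
  (∑ i, pd i (fun y => ∑ j, a y i j * pd j f y) x) + (∑ i, b x i * pd i f x) + c x * f x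

/-- The infinite strip `Ω = ℝ × Ω₀ ⊆ ℝ^{n+1}` (first coordinate `x₀` unconstrained). -/
def strip {n : ℕ} (Ω₀ : Set (Fin n → ℝ)) : Set (Fin (n + 1) → ℝ) :=
  {x | (fun i : Fin n => x i.succ) ∈ Ω₀}

/-- `D_r = (-r, r) × Ω₀`. -/
def Dset {n : ℕ} (Ω₀ : Set (Fin n → ℝ)) (r : ℝ) : Set (Fin (n + 1) → ℝ) :=
  {x | x 0 ∈ Ioo (-r) r ∧ (fun i : Fin n => x i.succ) ∈ Ω₀}

/-- `Q_r = (-r², 0] × D_r`. -/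
def Qset {n : ℕ} (Ω₀ : Set (Fin n → ℝ)) (r : ℝ) : Set (ℝ × (Fin (n + 1) → ℝ)) :=
  Ioc (-r ^ 2) 0 ×ˢ Dset Ω₀ r

/-- Ellipticity, boundedness and regularity of the coefficients of `L`. -/
structure GoodCoeffs {n : ℕ} (Ω₀ : Set (Fin n → ℝ)) (lam Lam : ℝ)
    (a : (Fin (n + 1) → ℝ) → Fin (n + 1) → Fin (n + 1) → ℝ)
    (b : (Fin (n + 1) → ℝ) → Fin (n + 1) → ℝ) (c : (Fin (n + 1) → ℝ) → ℝ) : Prop where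
  elliptic : ∀ x ∈ strip Ω₀, ∀ ξ : Fin (n + 1) → ℝ,
    lam * ∑ i, ξ i ^ 2 ≤ ∑ i, ∑ j, a x i j * ξ i * ξ j
  a_bdd : ∀ x ∈ strip Ω₀, ∀ i j, |a x i j| ≤ Lam
  a_reg : ∀ i j, ContDiffOn ℝ 1 (fun x => a x i j) (strip Ω₀)
  b_bdd : ∃ M, ∀ x ∈ strip Ω₀, ∀ i, |b x i| ≤ M
  c_bdd : ∃ M, ∀ x ∈ strip Ω₀, |c x| ≤ M

/-- The smallness condition with parameter `ε`: `|bⁱ| ≤ √ε` and `c ≤ ε` on `Ω`. -/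
def Smallness {n : ℕ} (Ω₀ : Set (Fin n → ℝ))
    (b : (Fin (n + 1) → ℝ) → Fin (n + 1) → ℝ) (c : (Fin (n + 1) → ℝ) → ℝ) (ε : ℝ) : Prop :=
  ∀ x ∈ strip Ω₀, (∀ i, |b x i| ≤ Real.sqrt ε) ∧ c x ≤ ε

/-- Ancient solution of `∂ₜ u = L u` on `ℝ⁻ × Ω` vanishing on `ℝ⁻ × ∂Ω`:
continuous up to the boundary, `C²` in space, differentiable in time, solving the equation. -/
structure IsAncientSolution {n : ℕ} (Ω₀ : Set (Fin n → ℝ))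
    (a : (Fin (n + 1) → ℝ) → Fin (n + 1) → Fin (n + 1) → ℝ)
    (b : (Fin (n + 1) → ℝ) → Fin (n + 1) → ℝ) (c : (Fin (n + 1) → ℝ) → ℝ)
    (u : ℝ → (Fin (n + 1) → ℝ) → ℝ) : Prop where
  cont : ContinuousOn (fun p : ℝ × (Fin (n + 1) → ℝ) => u p.1 p.2)
    (Iic (0 : ℝ) ×ˢ closure (strip Ω₀))
  space_reg : ∀ t ≤ (0 : ℝ), ContDiffOn ℝ 2 (u t) (strip Ω₀)
  pde : ∀ t ≤ (0 : ℝ), ∀ x ∈ strip Ω₀,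
    HasDerivWithinAt (fun s => u s x) (Lop a b c (u t) x) (Iic (0 : ℝ)) t
  bdry : ∀ t ≤ (0 : ℝ), ∀ x ∈ frontier (strip Ω₀), u t x = 0

/-- Membership in `E_d`: an ancient solution with exponential growth of order `d`. -/
def MemEd {n : ℕ} (Ω₀ : Set (Fin n → ℝ))
    (a : (Fin (n + 1) → ℝ) → Fin (n + 1) → Fin (n + 1) → ℝ)
    (b : (Fin (n + 1) → ℝ) → Fin (n + 1) → ℝ) (c : (Fin (n + 1) → ℝ) → ℝ)
    (d : ℝ) (u : ℝ → (Fin (n + 1) → ℝ) → ℝ) : Prop :=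
  IsAncientSolution Ω₀ a b c u ∧
  ∃ C > (0 : ℝ), ∀ t ≤ (0 : ℝ), ∀ x ∈ strip Ω₀,
    |u t x| ≤ C * Real.exp (d * (Real.sqrt (∑ i, x i ^ 2) + Real.sqrt |t|))

/-! ### A regularised square -/

/-- The second derivative `1 - δ² / max(s², δ²)` of the regularised square: it vanishes for
`|s| ≤ δ`, takes values in `[0, 1]` and tends to `1` as `δ → 0` for `s ≠ 0`. -/
def gfun (δ s : ℝ) : ℝ := 1 - δ ^ 2 / max (s ^ 2) (δ ^ 2)
/-- The odd primitive of `gfun δ`, a `C¹` regularisation of `s` vanishing for `|s| ≤ δ`. -/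
def hfun (δ s : ℝ) : ℝ := ∫ τ in (0 : ℝ)..s, gfun δ τ
/-- The even primitive of `hfun δ`, a `C²` regularisation of `s² / 2` vanishing for `|s| ≤ δ`. -/
def Hfun (δ s : ℝ) : ℝ := ∫ τ in (0 : ℝ)..s, hfun δ τ

theorem gfun_cont {δ : ℝ} (hδ : 0 < δ) : Continuous (gfun δ) := by
  unfold gfun
  refine continuous_const.sub (continuous_const.div (by fun_prop) ?_)
  intro s
  have : 0 < δ ^ 2 := by positivity
  exact (lt_max_of_lt_right this).ne'

theorem gfun_mono {δ : ℝ} (hδ : 0 < δ) {s t : ℝ} (h : s ^ 2 ≤ t ^ 2) : gfun δ s ≤ gfun δ t := by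
  unfold gfun
  have : 0 < δ ^ 2 := by positivity
  have h1 : 0 < max (s ^ 2) (δ ^ 2) := lt_max_of_lt_right this
  have h2 : max (s ^ 2) (δ ^ 2) ≤ max (t ^ 2) (δ ^ 2) := max_le_max_right _ h
  have := div_le_div_of_nonneg_left this.le h1 h2
  linarith

theorem gfun_le_one {δ : ℝ} (hδ : 0 < δ) (s : ℝ) : gfun δ s ≤ 1 := by
  unfold gfun
  have : 0 ≤ δ ^ 2 / max (s ^ 2) (δ ^ 2) := by positivity
  linarith

theorem gfun_eq_zero {δ : ℝ} (hδ : 0 < δ) {s : ℝ} (h : |s| ≤ δ) : gfun δ s = 0 := by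
  unfold gfun
  have h1 : s ^ 2 ≤ δ ^ 2 := sq_le_sq.2 (by rwa [abs_of_pos hδ])
  rw [max_eq_right h1, div_self (by positivity)]; ring

theorem gfun_nonneg {δ : ℝ} (hδ : 0 < δ) (s : ℝ) : 0 ≤ gfun δ s := by
  have := gfun_mono hδ (s := 0) (t := s) (by nlinarith [sq_nonneg s])
  rwa [gfun_eq_zero hδ (by simpa using hδ.le)] at this

theorem gfun_lower {δ : ℝ} (hδ : 0 < δ) {s : ℝ} (h : 2 * δ ≤ s) : 3 / 4 ≤ gfun δ s := by
  have := gfun_mono hδ (s := 2 * δ) (t := s) (by nlinarith)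
  refine le_trans (le_of_eq ?_) this
  unfold gfun
  rw [max_eq_left (by nlinarith)]
  field_simp; norm_num

theorem gfun_neg (δ s : ℝ) : gfun δ (-s) = gfun δ s := by simp [gfun]

theorem hfun_deriv {δ : ℝ} (hδ : 0 < δ) (s : ℝ) : HasDerivAt (hfun δ) (gfun δ s) s :=
  intervalIntegral.integral_hasDerivAt_right ((gfun_cont hδ).intervalIntegrable _ _)
    ((gfun_cont hδ).stronglyMeasurableAtFilter _ _) (gfun_cont hδ).continuousAt

theorem hfun_cont {δ : ℝ} (hδ : 0 < δ) : Continuous (hfun δ) :=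
  continuous_iff_continuousAt.2 fun s => (hfun_deriv hδ s).continuousAt

theorem hfun_contDiff {δ : ℝ} (hδ : 0 < δ) : ContDiff ℝ 1 (hfun δ) := by
  rw [contDiff_one_iff_deriv]
  refine ⟨fun s => (hfun_deriv hδ s).differentiableAt, ?_⟩
  rw [show deriv (hfun δ) = gfun δ from funext fun s => (hfun_deriv hδ s).deriv]
  exact gfun_cont hδ

theorem Hfun_deriv {δ : ℝ} (hδ : 0 < δ) (s : ℝ) : HasDerivAt (Hfun δ) (hfun δ s) s :=
  intervalIntegral.integral_hasDerivAt_right ((hfun_cont hδ).intervalIntegrable _ _)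
    ((hfun_cont hδ).stronglyMeasurableAtFilter _ _) (hfun_cont hδ).continuousAt

theorem Hfun_cont {δ : ℝ} (hδ : 0 < δ) : Continuous (Hfun δ) :=
  continuous_iff_continuousAt.2 fun s => (Hfun_deriv hδ s).continuousAt

theorem hfun_neg {δ : ℝ} (s : ℝ) : hfun δ (-s) = -hfun δ s := by
  unfold hfun
  have := intervalIntegral.integral_comp_neg (a := 0) (b := s) (gfun δ)
  simp only [gfun_neg, neg_zero] at this
  rw [this, intervalIntegral.integral_symm]

theorem Hfun_neg {δ : ℝ} (s : ℝ) : Hfun δ (-s) = Hfun δ s := by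
  unfold Hfun
  have := intervalIntegral.integral_comp_neg (a := 0) (b := s) (hfun δ)
  simp only [hfun_neg, neg_zero, intervalIntegral.integral_neg] at this
  rw [intervalIntegral.integral_symm, ← this]; ring

theorem hfun_nonneg {δ : ℝ} (hδ : 0 < δ) {s : ℝ} (h : 0 ≤ s) : 0 ≤ hfun δ s :=
  intervalIntegral.integral_nonneg h fun _ _ => gfun_nonneg hδ _

theorem hfun_le_aux {δ : ℝ} (hδ : 0 < δ) {s : ℝ} (h : 0 ≤ s) : hfun δ s ≤ s * gfun δ s := by
  have := intervalIntegral.integral_mono_on (f := gfun δ) (g := fun _ => gfun δ s) h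
    ((gfun_cont hδ).intervalIntegrable (μ := volume) _ _)
    (continuous_const.intervalIntegrable _ _)
    (fun x hx => gfun_mono hδ (pow_le_pow_left₀ hx.1 hx.2 2))
  simpa [hfun] using this

theorem abs_hfun_le {δ : ℝ} (hδ : 0 < δ) (s : ℝ) : |hfun δ s| ≤ |s| * gfun δ s := by
  rcases le_total 0 s with h | h
  · rw [abs_of_nonneg (hfun_nonneg hδ h), abs_of_nonneg h]; exact hfun_le_aux hδ h
  · have h' : 0 ≤ -s := by linarith
    rw [← abs_neg, ← hfun_neg, abs_of_nonneg (hfun_nonneg hδ h'), abs_of_nonpos h,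
      ← gfun_neg]
    exact hfun_le_aux hδ h'

theorem abs_hfun_le' {δ : ℝ} (hδ : 0 < δ) (s : ℝ) : |hfun δ s| ≤ |s| :=
  (abs_hfun_le hδ s).trans (mul_le_of_le_one_right (abs_nonneg s) (gfun_le_one hδ s))

/-- The bound that lets cross terms containing `hfun δ v` be absorbed into the elliptic term, whose
weight is `gfun δ v`. -/
theorem hfun_sq_le {δ : ℝ} (hδ : 0 < δ) (s : ℝ) : hfun δ s ^ 2 ≤ s ^ 2 * gfun δ s := by
  have h1 := abs_hfun_le hδ s
  have h2 := gfun_nonneg hδ s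
  have h3 := gfun_le_one hδ s
  rw [← sq_abs, ← sq_abs s]
  calc |hfun δ s| ^ 2 ≤ (|s| * gfun δ s) ^ 2 := pow_le_pow_left₀ (abs_nonneg _) h1 2
    _ = |s| ^ 2 * (gfun δ s * gfun δ s) := by ring
    _ ≤ |s| ^ 2 * (gfun δ s * 1) := by gcongr
    _ = _ := by ring

theorem hfun_eq_zero {δ : ℝ} (hδ : 0 < δ) {s : ℝ} (h : |s| ≤ δ) : hfun δ s = 0 := by
  have := abs_hfun_le hδ s
  rw [gfun_eq_zero hδ h, mul_zero] at this
  exact abs_nonpos_iff.1 this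

theorem mul_hfun_nonneg {δ : ℝ} (hδ : 0 < δ) (s : ℝ) : 0 ≤ s * hfun δ s := by
  rcases le_total 0 s with h | h
  · exact mul_nonneg h (hfun_nonneg hδ h)
  · have := hfun_nonneg hδ (s := -s) (by linarith)
    rw [hfun_neg] at this
    nlinarith

theorem mul_hfun_le {δ : ℝ} (hδ : 0 < δ) (s : ℝ) : s * hfun δ s ≤ s ^ 2 := by
  calc s * hfun δ s ≤ |s * hfun δ s| := le_abs_self _
    _ = |s| * |hfun δ s| := abs_mul _ _
    _ ≤ |s| * |s| := mul_le_mul_of_nonneg_left (abs_hfun_le' hδ s) (abs_nonneg s)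
    _ = s ^ 2 := by rw [abs_mul_abs_self]; ring

theorem Hfun_bounds {δ : ℝ} (hδ : 0 < δ) (s : ℝ) : 0 ≤ Hfun δ s ∧ Hfun δ s ≤ s ^ 2 := by
  wlog h : 0 ≤ s generalizing s
  · have := this (-s) (by linarith)
    rwa [Hfun_neg, neg_sq] at this
  refine ⟨intervalIntegral.integral_nonneg h fun x hx => hfun_nonneg hδ hx.1, ?_⟩
  have := intervalIntegral.integral_mono_on (f := hfun δ) (g := fun _ => s) h
    ((hfun_cont hδ).intervalIntegrable (μ := volume) _ _)
    (continuous_const.intervalIntegrable _ _)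
    (fun x hx => ((le_abs_self _).trans (abs_hfun_le' hδ x)).trans
      (by rw [abs_of_nonneg hx.1]; exact hx.2))
  simpa [Hfun, sq] using this

theorem Hfun_eq_zero {δ : ℝ} (hδ : 0 < δ) {s : ℝ} (h : |s| ≤ δ) : Hfun δ s = 0 := by
  unfold Hfun
  rw [intervalIntegral.integral_congr (g := fun _ => 0)]
  · simp
  · intro x hx
    refine hfun_eq_zero hδ (le_trans ?_ h)
    simpa using Set.abs_sub_left_of_mem_uIcc hx

/-- A Poincaré bound for `hfun δ v` controls `v` itself up to an error of order `δ²`. -/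
theorem sq_le_hfun {δ : ℝ} (hδ : 0 < δ) (s : ℝ) : s ^ 2 ≤ 4 * hfun δ s ^ 2 + 8 * δ ^ 2 := by
  wlog h : 0 ≤ s generalizing s
  · have := this (-s) (by linarith)
    rwa [hfun_neg, neg_sq, neg_sq] at this
  rcases le_total s (2 * δ) with h2 | h2
  · nlinarith [sq_nonneg (hfun δ s)]
  have h3 : 3 / 4 * (s - 2 * δ) ≤ hfun δ s := by
    have h4 : hfun δ s = hfun δ (2 * δ) + ∫ τ in (2 * δ)..s, gfun δ τ :=
      (intervalIntegral.integral_add_adjacent_intervals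
        ((gfun_cont hδ).intervalIntegrable _ _) ((gfun_cont hδ).intervalIntegrable _ _)).symm
    have h5 := intervalIntegral.integral_mono_on (f := fun _ => (3 / 4 : ℝ)) (g := gfun δ) h2
      (continuous_const.intervalIntegrable _ _)
      ((gfun_cont hδ).intervalIntegrable (μ := volume) _ _)
      (fun x hx => gfun_lower hδ hx.1)
    have h6 := hfun_nonneg hδ (s := 2 * δ) (by linarith)
    simp at h5
    linarith
  have h4 := hfun_nonneg hδ h
  nlinarith [sq_nonneg (4 / 3 * hfun δ s - 2 * δ), sq_nonneg (hfun δ s)]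

/-! ### Comparison at a spatial maximum -/

/-- Necessary second order condition at a local maximum. If `g` is not twice differentiable at `0`,
the junk value `0` of the derivative makes the statement trivial. -/
theorem second_deriv_nonpos {g : ℝ → ℝ} (hc : ContinuousAt g 0) (hm : IsLocalMax g 0) :
    deriv (deriv g) 0 ≤ 0 := by
  by_contra! h
  have hmin := isLocalMin_of_deriv_deriv_pos h hm.deriv_eq_zero hc
  have hconst : g =ᶠ[nhds 0] fun _ => g 0 := by
    filter_upwards [hm, hmin] with x h1 h2 using le_antisymm h1 h2
  have h1 : deriv g =ᶠ[nhds 0] fun _ => 0 := by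
    have := hconst.deriv
    simpa using this
  rw [h1.deriv_eq] at h
  simp at h

/-- The trace of a positive semidefinite (not necessarily symmetric) matrix against a negative
semidefinite one is nonpositive: write the symmetric part of `A` as a sum of rank-one matrices. -/
theorem trace_mul_nonpos {m : ℕ} (A M : Fin m → Fin m → ℝ) (hsymm : ∀ i j, M i j = M j i)
    (hA : ∀ ξ : Fin m → ℝ, 0 ≤ ∑ i, ∑ j, A i j * ξ i * ξ j)
    (hM : ∀ ξ : Fin m → ℝ, ∑ i, ∑ j, M i j * ξ i * ξ j ≤ 0) :
    ∑ i, ∑ j, A i j * M i j ≤ 0 := by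
  classical
  let S : Matrix (Fin m) (Fin m) ℝ := fun i j => (A i j + A j i) / 2
  have hS : S.PosSemidef := by
    refine Matrix.PosSemidef.of_dotProduct_mulVec_nonneg ?_ ?_
    · ext i j
      rw [Matrix.conjTranspose_apply]
      simp only [S, star_trivial]; ring
    · intro ξ
      have h1 := hA ξ
      have h2 : ∑ i, ∑ j, A i j * ξ i * ξ j = ∑ i, ∑ j, A j i * ξ i * ξ j := by
        rw [Finset.sum_comm]
        refine Finset.sum_congr rfl fun i _ => Finset.sum_congr rfl fun j _ => by ring
      have h3 : star ξ ⬝ᵥ S.mulVec ξ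
          = (∑ i, ∑ j, A i j * ξ i * ξ j + ∑ i, ∑ j, A j i * ξ i * ξ j) / 2 := by
        simp only [dotProduct, Matrix.mulVec, S, star_trivial, Finset.mul_sum]
        rw [← Finset.sum_add_distrib, Finset.sum_div]
        refine Finset.sum_congr rfl fun i _ => ?_
        rw [← Finset.sum_add_distrib, Finset.sum_div]
        refine Finset.sum_congr rfl fun j _ => by ring
      rw [h3, ← h2]; linarith
  obtain ⟨d, B, hB⟩ := Matrix.posSemidef_iff_eq_sum_vecMulVec.1 hS
  have h1 : ∑ i, ∑ j, A i j * M i j = ∑ i, ∑ j, S i j * M i j := by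
    have h2 : ∑ i, ∑ j, A i j * M i j = ∑ i, ∑ j, A j i * M i j := by
      rw [Finset.sum_comm]
      refine Finset.sum_congr rfl fun i _ => Finset.sum_congr rfl fun j _ => by rw [hsymm]
    have h3 : ∑ i, ∑ j, S i j * M i j =
        (∑ i, ∑ j, A i j * M i j + ∑ i, ∑ j, A j i * M i j) / 2 := by
      rw [← Finset.sum_add_distrib, Finset.sum_div]
      refine Finset.sum_congr rfl fun i _ => ?_
      rw [← Finset.sum_add_distrib, Finset.sum_div]
      refine Finset.sum_congr rfl fun j _ => by simp only [S]; ring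
    rw [h3, ← h2]; ring
  have h2 : ∑ i, ∑ j, S i j * M i j = ∑ k, ∑ i, ∑ j, M i j * B k i * B k j := by
    have h3 : ∀ i j, S i j = ∑ k, B k i * B k j := by
      intro i j
      rw [hB, Matrix.sum_apply]
      simp [Matrix.vecMulVec_apply]
    simp only [h3, Finset.sum_mul]
    rw [Finset.sum_comm]
    rw [Finset.sum_comm (s := (Finset.univ : Finset (Fin d)))]
    rw [Finset.sum_comm]
    refine Finset.sum_congr rfl fun i _ => ?_
    rw [Finset.sum_comm (s := (Finset.univ : Finset (Fin d)))]
    refine Finset.sum_congr rfl fun j _ => Finset.sum_congr rfl fun k _ => by ring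
  rw [h1, h2]
  exact Finset.sum_nonpos fun k _ => hM (B k)

theorem ContDiffAt.differentiableAt_pd {n : ℕ} {p : (Fin (n + 1) → ℝ) → ℝ}
    {x : Fin (n + 1) → ℝ} (hp : ContDiffAt ℝ 2 p x) (i : Fin (n + 1)) :
    DifferentiableAt ℝ (pd i p) x := by
  have : ContDiffAt ℝ 1 (fderiv ℝ p) x := hp.fderiv_right (by norm_num)
  exact (this.differentiableAt (by norm_num)).clm_apply (differentiableAt_const _)

theorem pd_pd {n : ℕ} {p : (Fin (n + 1) → ℝ) → ℝ}
    {x : Fin (n + 1) → ℝ} (hp : ContDiffAt ℝ 2 p x) (i j : Fin (n + 1)) :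
    pd i (pd j p) x = fderiv ℝ (fderiv ℝ p) x (Pi.single i 1) (Pi.single j 1) := by
  have : ContDiffAt ℝ 1 (fderiv ℝ p) x := hp.fderiv_right (by norm_num)
  have h := this.differentiableAt (by norm_num)
  change fderiv ℝ (fun y => fderiv ℝ p y (Pi.single j 1)) x _ = _
  rw [fderiv_clm_apply h (differentiableAt_const _)]
  simp

theorem hessian_nonpos {n : ℕ} {w : (Fin (n + 1) → ℝ) → ℝ} {x : Fin (n + 1) → ℝ}
    (hw : ContDiffAt ℝ 2 w x) (hm : IsLocalMax w x) (ξ : Fin (n + 1) → ℝ) :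
    ∑ i, ∑ j, pd i (pd j w) x * ξ i * ξ j ≤ 0 := by
  have hfd : DifferentiableAt ℝ (fderiv ℝ w) x :=
    (hw.fderiv_right (m := 1) (by norm_num)).differentiableAt (by norm_num)
  have hsum : ∑ i, ∑ j, pd i (pd j w) x * ξ i * ξ j = fderiv ℝ (fderiv ℝ w) x ξ ξ := by
    have hξ : ξ = ∑ i, ξ i • (Pi.single i (1 : ℝ) : Fin (n + 1) → ℝ) := by
      ext k; simp [Finset.sum_apply, Pi.single_apply]
    conv_rhs => rw [hξ]
    simp only [map_sum, map_smul, _root_.sum_apply, _root_.smul_apply,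
      smul_eq_mul, pd_pd hw]
    rw [Finset.sum_comm]
    simp only [Finset.mul_sum]
    refine Finset.sum_congr rfl fun i _ => Finset.sum_congr rfl fun j _ => by ring
  let ℓ : ℝ → (Fin (n + 1) → ℝ) := fun s => x + s • ξ
  have hℓ0 : ℓ 0 = x := by simp [ℓ]
  have hℓd : ∀ s, HasDerivAt ℓ ξ s := fun s => by
    simpa [ℓ] using ((hasDerivAt_id s).smul_const ξ).const_add x
  have hℓc : ContinuousAt ℓ 0 := (hℓd 0).continuousAt
  have htend : Tendsto ℓ (nhds 0) (nhds x) := by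
    have := hℓc.tendsto; rwa [hℓ0] at this
  have h1 : deriv (fun s => w (ℓ s)) =ᶠ[nhds 0] fun s => fderiv ℝ w (ℓ s) ξ := by
    have hev : ∀ᶠ y in nhds x, DifferentiableAt ℝ w y := by
      filter_upwards [hw.eventually (by simp)] with y hy using hy.differentiableAt (by norm_num)
    filter_upwards [htend.eventually hev] with s hs
    exact (hs.hasFDerivAt.comp_hasDerivAt s (hℓd s)).deriv
  have h2 : deriv (deriv (fun s => w (ℓ s))) 0 = fderiv ℝ (fderiv ℝ w) x ξ ξ := by
    rw [h1.deriv_eq]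
    have h3 : HasDerivAt (fun s => fderiv ℝ w (ℓ s)) (fderiv ℝ (fderiv ℝ w) x ξ) 0 := by
      have : HasFDerivAt (fderiv ℝ w) (fderiv ℝ (fderiv ℝ w) x) (ℓ 0) := by
        rw [hℓ0]; exact hfd.hasFDerivAt
      exact this.comp_hasDerivAt 0 (hℓd 0)
    have h4 := h3.clm_apply (hasDerivAt_const (0 : ℝ) ξ)
    simpa using h4.deriv
  rw [hsum, ← h2]
  refine second_deriv_nonpos ?_ ?_
  · have hwc : ContinuousAt w (ℓ 0) := by rw [hℓ0]; exact hw.continuousAt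
    exact hwc.comp hℓc
  · have := htend.eventually hm
    simpa [IsLocalMax, IsMaxFilter, hℓ0] using this

theorem pd_div {n : ℕ} {a : (Fin (n + 1) → ℝ) → Fin (n + 1) → Fin (n + 1) → ℝ}
    {p : (Fin (n + 1) → ℝ) → ℝ} {x : Fin (n + 1) → ℝ}
    (ha : ∀ i j, DifferentiableAt ℝ (fun x => a x i j) x) (hp : ContDiffAt ℝ 2 p x)
    (i k : Fin (n + 1)) :
    pd k (fun y => ∑ j, a y i j * pd j p y) x
      = ∑ j, (a x i j * pd k (pd j p) x + pd j p x * pd k (fun y => a y i j) x) := by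
  have h : HasFDerivAt (fun y => ∑ j, a y i j * pd j p y)
      (∑ j, (a x i j • fderiv ℝ (pd j p) x + pd j p x • fderiv ℝ (fun y => a y i j) x)) x :=
    HasFDerivAt.fun_sum fun j _ => (ha i j).hasFDerivAt.mul (hp.differentiableAt_pd j).hasFDerivAt
  unfold pd at h ⊢
  rw [h.fderiv]
  simp

/-- Comparison for the operator without zeroth order term at a local maximum of `p - q`: there the
gradients agree and the Hessian of the difference is negative semidefinite. -/
theorem Lop_le_of_localMax {n : ℕ} {a : (Fin (n + 1) → ℝ) → Fin (n + 1) → Fin (n + 1) → ℝ}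
    {b : (Fin (n + 1) → ℝ) → Fin (n + 1) → ℝ}
    {p q : (Fin (n + 1) → ℝ) → ℝ} {x : Fin (n + 1) → ℝ}
    (ha : ∀ i j, DifferentiableAt ℝ (fun x => a x i j) x)
    (hpos : ∀ ξ : Fin (n + 1) → ℝ, 0 ≤ ∑ i, ∑ j, a x i j * ξ i * ξ j)
    (hp : ContDiffAt ℝ 2 p x) (hq : ContDiffAt ℝ 2 q x)
    (hm : IsLocalMax (fun y => p y - q y) x) :
    Lop a b (fun _ => 0) p x ≤ Lop a b (fun _ => 0) q x := by
  have hw : ContDiffAt ℝ 2 (fun y => p y - q y) x := hp.sub hq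
  have hpd : ∀ y, ContDiffAt ℝ 2 p y → ContDiffAt ℝ 2 q y → ∀ j,
      pd j (fun y => p y - q y) y = pd j p y - pd j q y := by
    intro y h1 h2 j
    unfold pd
    rw [fderiv_fun_sub (h1.differentiableAt (by norm_num)) (h2.differentiableAt (by norm_num))]
    simp
  have h0 : ∀ j, pd j p x = pd j q x := by
    intro j
    have := hpd x hp hq j
    have h1 : pd j (fun y => p y - q y) x = 0 := by
      unfold pd; rw [hm.fderiv_eq_zero]; simp
    linarith
  have h2 : ∀ i j, pd i (pd j (fun y => p y - q y)) x = pd i (pd j p) x - pd i (pd j q) x := by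
    intro i j
    have : pd j (fun y => p y - q y) =ᶠ[nhds x] fun y => pd j p y - pd j q y := by
      filter_upwards [hp.eventually (by simp), hq.eventually (by simp)] with y h1 h2
        using hpd y h1 h2 j
    change fderiv ℝ (pd j fun y => p y - q y) x _ = fderiv ℝ (pd j p) x _ - fderiv ℝ (pd j q) x _
    rw [this.fderiv_eq, fderiv_fun_sub (hp.differentiableAt_pd j) (hq.differentiableAt_pd j)]
    simp
  have h3 := trace_mul_nonpos (a x) (fun i j => pd i (pd j (fun y => p y - q y)) x)
    (fun i j => by
      have := (hw.isSymmSndFDerivAt (by simp)) (Pi.single i 1) (Pi.single j 1)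
      simp only [pd_pd hw]
      exact this) hpos (hessian_nonpos hw hm)
  simp only [h2] at h3
  unfold Lop
  simp only [pd_div ha hp, pd_div ha hq, h0, mul_sub, Finset.sum_sub_distrib,
    Finset.sum_add_distrib] at h3 ⊢
  linarith

/-! ### One-sided Lipschitz bound in time -/

theorem strip_isOpen {n : ℕ} {Ω₀ : Set (Fin n → ℝ)} (h : IsOpen Ω₀) : IsOpen (strip Ω₀) :=
  h.preimage (f := fun (x : Fin (n + 1) → ℝ) (i : Fin n) => x i.succ) (by fun_prop)

theorem pd_contDiffOn {n : ℕ} {U : Set (Fin (n + 1) → ℝ)} (hU : IsOpen U)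
    {f : (Fin (n + 1) → ℝ) → ℝ} (hf : ContDiffOn ℝ 2 f U) (i : Fin (n + 1)) :
    ContDiffOn ℝ 1 (pd i f) U :=
  (hf.fderiv_of_isOpen hU (m := 1) (by norm_num)).clm_apply contDiffOn_const

theorem pd_continuousOn {n : ℕ} {U : Set (Fin (n + 1) → ℝ)} (hU : IsOpen U)
    {f : (Fin (n + 1) → ℝ) → ℝ} (hf : ContDiffOn ℝ 1 f U) (i : Fin (n + 1)) :
    ContinuousOn (pd i f) U :=
  (hf.continuousOn_fderiv_of_isOpen hU (by norm_num)).clm_apply continuousOn_const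

theorem flux_contDiffOn {n : ℕ} {U : Set (Fin (n + 1) → ℝ)} (hU : IsOpen U)
    {a : (Fin (n + 1) → ℝ) → Fin (n + 1) → Fin (n + 1) → ℝ}
    (ha : ∀ i j, ContDiffOn ℝ 1 (fun x => a x i j) U)
    {f : (Fin (n + 1) → ℝ) → ℝ} (hf : ContDiffOn ℝ 2 f U) (i : Fin (n + 1)) :
    ContDiffOn ℝ 1 (fun y => ∑ j, a y i j * pd j f y) U :=
  ContDiffOn.sum fun j _ => (ha i j).mul (pd_contDiffOn hU hf j)

/-- Although `b` need not be continuous, `L f - c f` is bounded on compact sets. -/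
theorem Lop_bounded {n : ℕ} {U S : Set (Fin (n + 1) → ℝ)} (hU : IsOpen U)
    {a : (Fin (n + 1) → ℝ) → Fin (n + 1) → Fin (n + 1) → ℝ}
    {b : (Fin (n + 1) → ℝ) → Fin (n + 1) → ℝ}
    (ha : ∀ i j, ContDiffOn ℝ 1 (fun x => a x i j) U)
    (hb : ∃ M, ∀ x ∈ U, ∀ i, |b x i| ≤ M)
    {f : (Fin (n + 1) → ℝ) → ℝ} (hf : ContDiffOn ℝ 2 f U)
    (hS : IsCompact S) (hSU : S ⊆ U) : ∃ C, ∀ x ∈ S, |Lop a b (fun _ => 0) f x| ≤ C := by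
  obtain ⟨M, hM⟩ := hb
  have h1 : ContinuousOn (fun x => ∑ i, pd i (fun y => ∑ j, a y i j * pd j f y) x) S :=
    (continuousOn_finsetSum _ fun i _ => pd_continuousOn hU (flux_contDiffOn hU ha hf i) i).mono hSU
  have h2 : ContinuousOn (fun x => ∑ i, |pd i f x|) S :=
    (continuousOn_finsetSum _ fun i _ =>
      (pd_continuousOn hU (hf.of_le (by norm_num)) i).abs).mono hSU
  obtain ⟨C1, hC1⟩ := hS.exists_bound_of_continuousOn h1
  obtain ⟨C2, hC2⟩ := hS.exists_bound_of_continuousOn h2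
  refine ⟨C1 + M * C2, fun x hx => ?_⟩
  have e1 := hC1 x hx
  have e2 := hC2 x hx
  rw [Real.norm_eq_abs] at e1 e2
  have hM0 : 0 ≤ M := (abs_nonneg _).trans (hM x (hSU hx) 0)
  have e3 : |∑ i, b x i * pd i f x| ≤ M * C2 := by
    calc |∑ i, b x i * pd i f x| ≤ ∑ i, |b x i * pd i f x| := Finset.abs_sum_le_sum_abs _ _
      _ ≤ ∑ i, M * |pd i f x| := Finset.sum_le_sum fun i _ => by
          rw [abs_mul]
          exact mul_le_mul_of_nonneg_right (hM x (hSU hx) i) (abs_nonneg _)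
      _ = M * ∑ i, |pd i f x| := by rw [Finset.mul_sum]
      _ ≤ M * C2 := mul_le_mul_of_nonneg_left ((le_abs_self _).trans e2) hM0
  unfold Lop
  rw [zero_mul, add_zero]
  exact (abs_add_le _ _).trans (add_le_add e1 e3)

theorem exists_cutoff {E : Type*} [NormedAddCommGroup E] [NormedSpace ℝ E]
    [FiniteDimensional ℝ E] {K U : Set E} (hK : IsCompact K) (hU : IsOpen U) (hKU : K ⊆ U) :
    ∃ (f : E → ℝ) (W : Set E), ContDiff ℝ 2 f ∧ IsOpen W ∧ IsCompact (closure W) ∧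
      closure W ⊆ U ∧ (∀ x ∈ K, f x = 1) ∧ (∀ x ∉ W, f x = 0) ∧ ∀ x, f x ≤ 1 := by
  have := FiniteDimensional.proper_real E
  obtain ⟨W, hW, hKW, hWU, hWc⟩ := exists_open_between_and_isCompact_closure hK hU hKU
  obtain ⟨f, hf, hr, hs, h1⟩ := exists_contMDiff_support_eq_eq_one_iff
    (modelWithCornersSelf ℝ E) (n := 2) hW hK.isClosed hKW
  refine ⟨f, W, hf.contDiff, hW, hWc, hWU, fun x hx => (h1 x).1 hx, fun x hx => ?_, fun x =>
    (hr (mem_range_self x)).2⟩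
  rw [← hs] at hx
  simpa using hx

theorem deriv_nonneg_of_left_max {f : ℝ → ℝ} {d t t0 z : ℝ} (h0 : t0 < t) (hz : t ≤ z)
    (hd : HasDerivWithinAt f d (Iic z) t) (hm : ∀ s ∈ Ico t0 t, f s ≤ f t) : 0 ≤ d := by
  have h1 : HasDerivWithinAt f d (Iio t) t := hd.mono fun s hs => (le_of_lt hs).trans hz
  rw [hasDerivWithinAt_iff_tendsto_slope' (by simp)] at h1
  refine ge_of_tendsto h1 ?_
  filter_upwards [Ico_mem_nhdsLT h0] with s hs
  rw [slope_def_field]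
  exact div_nonneg_of_nonpos (by linarith [hm s hs]) (by linarith [hs.2])

/-- Upper half of `time_lipschitz`, by comparison with the barrier
`u(t₀, x) + (2m + 1) (1 - f(x)) + C (t - t₀)`, where `f` is a cutoff equal to `1` on `K` and `m` bounds
`|u|` near the support of `f`. At an interior positive maximum of the difference the equation is
violated once `C` exceeds the bound for `L` applied to the spatial part. -/
theorem time_upper {n : ℕ} {Ω₀ : Set (Fin n → ℝ)} (hΩ : IsOpen Ω₀) {lam Lam : ℝ} (hlam : 0 < lam)
    {a : (Fin (n + 1) → ℝ) → Fin (n + 1) → Fin (n + 1) → ℝ}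
    {b : (Fin (n + 1) → ℝ) → Fin (n + 1) → ℝ} {c : (Fin (n + 1) → ℝ) → ℝ}
    (hg : GoodCoeffs Ω₀ lam Lam a b c) {u : ℝ → (Fin (n + 1) → ℝ) → ℝ}
    (hu : IsAncientSolution Ω₀ a b c u) {K : Set (Fin (n + 1) → ℝ)} (hK : IsCompact K)
    (hKU : K ⊆ strip Ω₀) {t0 : ℝ} (ht0 : t0 ≤ 0) :
    ∃ C, ∀ x ∈ K, ∀ t ∈ Icc t0 0, u t x - u t0 x ≤ C * (t - t0) := by
  have hU := strip_isOpen hΩ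
  obtain ⟨f, W, hf, hW, hWc, hWU, hf1, hf0, hfle⟩ := exists_cutoff hK hU hKU
  have hcont : ContinuousOn (fun p : ℝ × (Fin (n + 1) → ℝ) => u p.1 p.2) (Icc t0 0 ×ˢ closure W) :=
    hu.cont.mono (prod_mono (fun s hs => hs.2) (hWU.trans subset_closure))
  have hcomp : IsCompact (Icc t0 0 ×ˢ closure W) := isCompact_Icc.prod hWc
  obtain ⟨m, hm⟩ := hcomp.exists_bound_of_continuousOn hcont
  obtain ⟨Mc, hMc⟩ := hg.c_bdd
  -- The weight `2 * m + 1` makes the barrier exceed `u` off `W`, where `f = 0`.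
  let ψ : (Fin (n + 1) → ℝ) → ℝ := fun x => u t0 x + (2 * m + 1) * (1 - f x)
  have hψ : ContDiffOn ℝ 2 ψ (strip Ω₀) :=
    (hu.space_reg t0 ht0).add (contDiffOn_const.mul (contDiffOn_const.sub hf.contDiffOn))
  obtain ⟨C1, hC1⟩ := Lop_bounded hU hg.a_reg hg.b_bdd hψ hWc hWU
  let C : ℝ := C1 + Mc * m + 1
  let v : ℝ × (Fin (n + 1) → ℝ) → ℝ := fun p => u p.1 p.2 - ψ p.2 - C * (p.1 - t0)
  have hvc : ContinuousOn v (Icc t0 0 ×ˢ closure W) := by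
    refine (hcont.sub ?_).sub (by fun_prop)
    exact (hψ.continuousOn.mono hWU).comp continuousOn_snd fun p hp => hp.2
  suffices hmain : ∀ p ∈ Icc t0 0 ×ˢ closure W, v p ≤ 0 by
    refine ⟨C, fun x hx t ht => ?_⟩
    have hxW : x ∈ W := by
      by_contra h
      have := hf0 x h
      rw [hf1 x hx] at this
      norm_num at this
    have := hmain (t, x) ⟨ht, subset_closure hxW⟩
    simp only [v, ψ, hf1 x hx] at this
    linarith
  by_contra! hcon
  obtain ⟨p0, hp0, hp0pos⟩ := hcon
  obtain ⟨⟨t, x⟩, ⟨ht, hx⟩, hmax⟩ := hcomp.exists_isMaxOn ⟨p0, hp0⟩ hvc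
  have hpos : 0 < v (t, x) := hp0pos.trans_le (hmax hp0)
  have hb1 := abs_le.1 (hm (t, x) ⟨ht, hx⟩)
  have hb0 := abs_le.1 (hm (t0, x) ⟨left_mem_Icc.2 ht0, hx⟩)
  simp only at hb0 hb1 ht hx
  have hm0 : 0 ≤ m := (norm_nonneg _).trans (hm (t, x) ⟨ht, hx⟩)
  have hxU : x ∈ strip Ω₀ := hWU hx
  have hMc0 : 0 ≤ Mc := (abs_nonneg _).trans (hMc x hxU)
  have hC10 : 0 ≤ C1 := (abs_nonneg _).trans (hC1 x hx)
  have hC0 : 0 ≤ C := by positivity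
  have hCt : 0 ≤ C * (t - t0) := mul_nonneg hC0 (by linarith [ht.1])
  have hxW : x ∈ W := by
    by_contra h
    simp only [v, ψ, hf0 x h] at hpos
    linarith
  have htt : t0 < t := by
    rcases eq_or_lt_of_le ht.1 with h | h
    · exfalso
      subst h
      have h2 : 0 ≤ (2 * m + 1) * (1 - f x) := mul_nonneg (by linarith) (by linarith [hfle x])
      simp only [v, ψ] at hpos
      linarith
    · exact h
  have hloc : IsLocalMax (fun y => u t y - ψ y) x := by
    filter_upwards [hW.mem_nhds hxW] with y hy
    have : v (t, y) ≤ v (t, x) := hmax (show (t, y) ∈ _ from ⟨ht, subset_closure hy⟩)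
    simp only [v] at this
    linarith
  have hnhds := hU.mem_nhds hxU
  have hcmp := Lop_le_of_localMax (a := a) (b := b)
    (fun i j => ((hg.a_reg i j).contDiffAt hnhds).differentiableAt (by norm_num))
    (fun ξ => (mul_nonneg hlam.le (Finset.sum_nonneg fun i _ => sq_nonneg _)).trans
      (hg.elliptic x hxU ξ))
    ((hu.space_reg t ht.2).contDiffAt hnhds) (hψ.contDiffAt hnhds) hloc
  have hder : HasDerivWithinAt (fun s => u s x - ψ x - C * (s - t0))
      (Lop a b c (u t) x - C) (Iic 0) t := by
    have h1 := (hu.pde t ht.2 x hxU).sub_const (ψ x)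
    have h2 : HasDerivWithinAt (fun s => C * (s - t0)) C (Iic 0) t := by
      simpa using ((hasDerivWithinAt_id t (Iic 0)).sub_const t0).const_mul C
    exact h1.sub h2
  have hd := deriv_nonneg_of_left_max htt ht.2 hder fun s hs =>
    hmax (show (s, x) ∈ _ from ⟨⟨hs.1, hs.2.le.trans ht.2⟩, hx⟩)
  have hL : Lop a b c (u t) x = Lop a b (fun _ => 0) (u t) x + c x * u t x := by
    unfold Lop; ring
  have hcu : c x * u t x ≤ Mc * m := by
    calc c x * u t x ≤ |c x * u t x| := le_abs_self _
      _ = |c x| * |u t x| := abs_mul _ _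
      _ ≤ Mc * m := mul_le_mul (hMc x hxU) (abs_le.2 hb1) (abs_nonneg _) hMc0
  have := (le_abs_self _).trans (hC1 x hx)
  simp only [C] at hd
  linarith

theorem pd_neg' {n : ℕ} (i : Fin (n + 1)) (f : (Fin (n + 1) → ℝ) → ℝ) (x : Fin (n + 1) → ℝ) :
    pd i (fun y => -f y) x = -pd i f x := by
  unfold pd; rw [fderiv_fun_neg]; simp

theorem neg_solution {n : ℕ} {Ω₀ : Set (Fin n → ℝ)}
    {a : (Fin (n + 1) → ℝ) → Fin (n + 1) → Fin (n + 1) → ℝ}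
    {b : (Fin (n + 1) → ℝ) → Fin (n + 1) → ℝ} {c : (Fin (n + 1) → ℝ) → ℝ}
    {u : ℝ → (Fin (n + 1) → ℝ) → ℝ}
    (hu : IsAncientSolution Ω₀ a b c u) : IsAncientSolution Ω₀ a b c (fun t x => -u t x) where
  cont := hu.cont.neg
  space_reg t ht := (hu.space_reg t ht).neg
  bdry t ht x hx := by simp [hu.bdry t ht x hx]
  pde t ht x hx := by
    have := (hu.pde t ht x hx).neg
    have h2 : Lop a b c (fun x => -u t x) x = -Lop a b c (u t) x := by
      unfold Lop
      simp only [pd_neg', mul_neg, Finset.sum_neg_distrib]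
      ring
    rw [h2]; exact this

/-- Domination of the difference quotients in time, starting from a fixed time `t0` and uniform on
compact subsets of the strip. -/
theorem time_lipschitz {n : ℕ} {Ω₀ : Set (Fin n → ℝ)} (hΩ : IsOpen Ω₀) {lam Lam : ℝ}
    (hlam : 0 < lam)
    {a : (Fin (n + 1) → ℝ) → Fin (n + 1) → Fin (n + 1) → ℝ}
    {b : (Fin (n + 1) → ℝ) → Fin (n + 1) → ℝ} {c : (Fin (n + 1) → ℝ) → ℝ}
    (hg : GoodCoeffs Ω₀ lam Lam a b c) {u : ℝ → (Fin (n + 1) → ℝ) → ℝ}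
    (hu : IsAncientSolution Ω₀ a b c u) {K : Set (Fin (n + 1) → ℝ)} (hK : IsCompact K)
    (hKU : K ⊆ strip Ω₀) {t0 : ℝ} (ht0 : t0 ≤ 0) :
    ∃ C, ∀ x ∈ K, ∀ t ∈ Icc t0 0, |u t x - u t0 x| ≤ C * (t - t0) := by
  obtain ⟨C1, h1⟩ := time_upper hΩ hlam hg hu hK hKU ht0
  obtain ⟨C2, h2⟩ := time_upper hΩ hlam hg (neg_solution hu) hK hKU ht0
  refine ⟨max C1 C2, fun x hx t ht => ?_⟩
  have e1 := h1 x hx t ht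
  have e2 := h2 x hx t ht
  have e0 : 0 ≤ t - t0 := by linarith [ht.1]
  have e3 := mul_le_mul_of_nonneg_right (le_max_left C1 C2) e0
  have e4 := mul_le_mul_of_nonneg_right (le_max_right C1 C2) e0
  rw [abs_le]; constructor <;> linarith

/-! ### Poincaré inequality on the strip -/

theorem sq_integral_le {f : ℝ → ℝ} (hf : Continuous f) :
    (∫ s in (0 : ℝ)..1, f s) ^ 2 ≤ ∫ s in (0 : ℝ)..1, f s ^ 2 := by
  set I := ∫ s in (0 : ℝ)..1, f s with hI
  have h0 : 0 ≤ ∫ s in (0 : ℝ)..1, (f s - I) ^ 2 :=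
    intervalIntegral.integral_nonneg zero_le_one fun _ _ => sq_nonneg _
  have h1 : ∫ s in (0 : ℝ)..1, (f s - I) ^ 2
      = (∫ s in (0 : ℝ)..1, f s ^ 2) - 2 * I * I + I ^ 2 := by
    have : ∀ s, (f s - I) ^ 2 = f s ^ 2 - 2 * I * f s + I ^ 2 := fun s => by ring
    simp only [this]
    rw [intervalIntegral.integral_add, intervalIntegral.integral_sub,
      intervalIntegral.integral_const_mul, ← hI]
    · simp
    all_goals exact Continuous.intervalIntegrable (by fun_prop) _ _
  nlinarith

/-- The embedding `z ↦ (0, z)` of the cross-sectional directions `ℝⁿ` into `ℝ^{n+1}`. -/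
def emb {n : ℕ} (z : Fin n → ℝ) : Fin (n + 1) → ℝ := Fin.cons 0 z

theorem emb_continuous {n : ℕ} : Continuous (emb (n := n)) := by
  refine continuous_pi fun i => ?_
  refine Fin.cases ?_ (fun j => ?_) i
  · simpa [emb] using continuous_const
  · simpa [emb] using continuous_apply j

/-- Fundamental theorem of calculus and Cauchy-Schwarz along the segment from `x` to `x + (0, z)`. -/
theorem translate_le {n : ℕ} {F : (Fin (n + 1) → ℝ) → ℝ} (hF : ContDiff ℝ 1 F) {ρ : ℝ}
    (x : Fin (n + 1) → ℝ) {z : Fin n → ℝ} (hz : z ∈ Icc (0 : Fin n → ℝ) (fun _ => ρ)) :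
    (F (x + emb z) - F x) ^ 2
      ≤ ∫ s in (0 : ℝ)..1, n * ρ ^ 2 * ∑ i : Fin n, pd i.succ F (x + s • emb z) ^ 2 := by
  have hdF : Continuous (fderiv ℝ F) := hF.continuous_fderiv (by norm_num)
  have hline : Continuous fun s : ℝ => x + s • emb z := by fun_prop
  have hcont : Continuous fun s : ℝ => fderiv ℝ F (x + s • emb z) (emb z) :=
    (hdF.comp hline).clm_apply continuous_const
  have hderiv : ∀ s : ℝ, HasDerivAt (fun s => F (x + s • emb z))
      (fderiv ℝ F (x + s • emb z) (emb z)) s := by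
    intro s
    have h1 : HasDerivAt (fun s : ℝ => x + s • emb z) (emb z) s := by
      simpa using ((hasDerivAt_id s).smul_const (emb z)).const_add x
    exact ((hF.differentiable (by norm_num) _).hasFDerivAt).comp_hasDerivAt s h1
  have hFTC : ∫ s in (0 : ℝ)..1, fderiv ℝ F (x + s • emb z) (emb z) = F (x + emb z) - F x := by
    rw [intervalIntegral.integral_eq_sub_of_hasDerivAt (fun s _ => hderiv s)
      (hcont.intervalIntegrable _ _)]
    simp
  rw [← hFTC]
  refine (sq_integral_le hcont).trans ?_
  have hpd : ∀ i, Continuous (pd i F) := fun i => hdF.clm_apply continuous_const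
  refine intervalIntegral.integral_mono_on zero_le_one
    (Continuous.intervalIntegrable (hcont.pow 2) _ _)
    (Continuous.intervalIntegrable ?_ _ _) ?_
  · exact continuous_const.mul (continuous_finsetSum _ fun i _ =>
      ((hpd i.succ).comp hline).pow 2)
  intro s _
  have h1 : fderiv ℝ F (x + s • emb z) (emb z) = ∑ i : Fin n, z i * pd i.succ F (x + s • emb z) := by
    have : emb z = ∑ i : Fin n, z i • (Pi.single i.succ (1 : ℝ) : Fin (n + 1) → ℝ) := by
      ext k
      refine Fin.cases ?_ (fun j => ?_) k
      · simp [emb, Finset.sum_apply]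
      · simp [emb, Finset.sum_apply, Pi.single_apply]
    conv_lhs => arg 2; rw [this]
    simp [map_sum, pd]
  rw [h1]
  refine (Finset.sum_mul_sq_le_sq_mul_sq _ _ _).trans ?_
  refine mul_le_mul_of_nonneg_right ?_ (Finset.sum_nonneg fun i _ => sq_nonneg _)
  calc ∑ i, z i ^ 2 ≤ ∑ _i : Fin n, ρ ^ 2 :=
        Finset.sum_le_sum fun i _ => pow_le_pow_left₀ (hz.1 i) (hz.2 i) 2
    _ = n * ρ ^ 2 := by simp

/-- The cube `[0, ρ]ⁿ` has volume `2 V₀`, so translating `x` by a set of vectors of measure at least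
`V₀` in it leads out of the strip, where `F = 0`. -/
theorem vol_mul_sq_le {n : ℕ} {V₀ ρ : ℝ} (hV : 0 < V₀) (hρ : 0 < ρ) (hρV : ρ ^ n = 2 * V₀)
    {Ω₀ : Set (Fin n → ℝ)} (hΩ : IsOpen Ω₀) (hvol : volume Ω₀ = ENNReal.ofReal V₀)
    {F : (Fin (n + 1) → ℝ) → ℝ} (h0 : ∀ x ∉ strip Ω₀, F x = 0) (x : Fin (n + 1) → ℝ) :
    ENNReal.ofReal V₀ * ENNReal.ofReal (F x ^ 2) ≤
      ∫⁻ z in Icc (0 : Fin n → ℝ) (fun _ => ρ), ENNReal.ofReal ((F (x + emb z) - F x) ^ 2) := by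
  let y : Fin n → ℝ := fun i => x i.succ
  let Q := Icc (0 : Fin n → ℝ) (fun _ => ρ)
  let B : Set (Fin n → ℝ) := (fun z => y + z) ⁻¹' Ω₀
  have hBm : MeasurableSet B := (hΩ.preimage (by fun_prop)).measurableSet
  have hB : volume B = ENNReal.ofReal V₀ := by rw [← hvol]; exact measure_preimage_add _ _ _
  have hQ : volume Q = ENNReal.ofReal (2 * V₀) := by
    rw [Real.volume_Icc_pi]
    simp [← hρV, ENNReal.ofReal_pow hρ.le]
  have hG : ENNReal.ofReal V₀ ≤ volume (Q \ B) := by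
    have h1 : volume Q - volume B ≤ volume (Q \ B) := le_measure_sdiff
    rw [hQ, hB, ← ENNReal.ofReal_sub _ hV.le] at h1
    convert h1 using 2; ring
  calc ENNReal.ofReal V₀ * ENNReal.ofReal (F x ^ 2)
      ≤ volume (Q \ B) * ENNReal.ofReal (F x ^ 2) := by gcongr
    _ = ∫⁻ z in Q \ B, ENNReal.ofReal (F x ^ 2) := by
        rw [setLIntegral_const, mul_comm]
    _ = ∫⁻ z in Q \ B, ENNReal.ofReal ((F (x + emb z) - F x) ^ 2) := by
        refine setLIntegral_congr_fun (measurableSet_Icc.diff hBm) fun z hz => ?_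
        have : F (x + emb z) = 0 := by
          refine h0 _ fun hmem => hz.2 ?_
          simpa [strip, emb, B, y, Pi.add_def] using hmem
        simp only [this]; congr 1; ring
    _ ≤ _ := lintegral_mono_set sdiff_subset

set_option maxHeartbeats 1000000 in
/-- Poincaré inequality with a constant depending only on `n` and the volume of the cross-section:
integrate `vol_mul_sq_le` over `x`, apply `translate_le` and use translation invariance. -/
theorem poincare {n : ℕ} {V₀ ρ : ℝ} (hV : 0 < V₀) (hρ : 0 < ρ) (hρV : ρ ^ n = 2 * V₀)
    {Ω₀ : Set (Fin n → ℝ)} (hΩ : IsOpen Ω₀) (hvol : volume Ω₀ = ENNReal.ofReal V₀)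
    {F : (Fin (n + 1) → ℝ) → ℝ} (hF : ContDiff ℝ 1 F) (hc : HasCompactSupport F)
    (h0 : ∀ x ∉ strip Ω₀, F x = 0) :
    ∫ x, F x ^ 2 ≤ 2 * (n * ρ ^ 2) * ∫ x, ∑ i : Fin n, pd i.succ F x ^ 2 := by
  let P : (Fin (n + 1) → ℝ) → ℝ := fun x => ∑ i : Fin n, pd i.succ F x ^ 2
  have hPnn : ∀ x, 0 ≤ P x := fun x => Finset.sum_nonneg fun i _ => sq_nonneg _
  have hdF : Continuous (fderiv ℝ F) := hF.continuous_fderiv (by norm_num)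
  have hpd : ∀ i, Continuous (pd i F) := fun i => hdF.clm_apply continuous_const
  have hPc : Continuous P := continuous_finsetSum _ fun i _ => (hpd i.succ).pow 2
  have hPcs : HasCompactSupport P := by
    refine (hc.fderiv (𝕜 := ℝ)).mono fun x hx => ?_
    contrapose! hx
    simp only [Function.mem_support, not_not] at hx ⊢
    simp [P, pd, hx]
  have hPi : Integrable P := hPc.integrable_of_hasCompactSupport hPcs
  have hFi : Integrable (fun x => F x ^ 2) := by
    refine (hF.continuous.pow 2).integrable_of_hasCompactSupport ?_
    refine hc.mono fun x hx => ?_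
    contrapose! hx
    simp only [Function.mem_support, not_not] at hx ⊢
    simp [hx]
  let κ : Measure ((Fin n → ℝ) × ℝ) :=
    (volume.restrict (Icc (0 : Fin n → ℝ) (fun _ => ρ))).prod (volume.restrict (Ioc (0 : ℝ) 1))
  let k : ℝ := n * ρ ^ 2
  have hk : 0 ≤ k := by positivity
  have hQ : volume (Icc (0 : Fin n → ℝ) (fun _ => ρ)) = ENNReal.ofReal (2 * V₀) := by
    rw [Real.volume_Icc_pi]
    simp [← hρV, ENNReal.ofReal_pow hρ.le]
  have hκ : κ univ = ENNReal.ofReal (2 * V₀) := by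
    rw [← univ_prod_univ, Measure.prod_prod]
    simp [hQ]
  have : SFinite κ := inferInstance
  have hcontP : Continuous fun p : (Fin (n + 1) → ℝ) × ((Fin n → ℝ) × ℝ) =>
      k * P (p.1 + p.2.2 • emb p.2.1) := by
    refine continuous_const.mul (hPc.comp (continuous_fst.add ?_))
    exact (continuous_snd.comp continuous_snd).smul
      (emb_continuous.comp (continuous_fst.comp continuous_snd))
  have key : ENNReal.ofReal V₀ * ∫⁻ x, ENNReal.ofReal (F x ^ 2)
      ≤ ENNReal.ofReal (2 * V₀) * ∫⁻ x, ENNReal.ofReal (k * P x) := by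
    calc ENNReal.ofReal V₀ * ∫⁻ x, ENNReal.ofReal (F x ^ 2)
        = ∫⁻ x, ENNReal.ofReal V₀ * ENNReal.ofReal (F x ^ 2) := by
          rw [lintegral_const_mul]
          exact (hF.continuous.pow 2).measurable.ennreal_ofReal
      _ ≤ ∫⁻ x, ∫⁻ z in Icc (0 : Fin n → ℝ) (fun _ => ρ),
            ENNReal.ofReal ((F (x + emb z) - F x) ^ 2) :=
          lintegral_mono fun x => vol_mul_sq_le hV hρ hρV hΩ hvol h0 x
      _ ≤ ∫⁻ x, ∫⁻ q, ENNReal.ofReal (k * P (x + q.2 • emb q.1)) ∂κ := by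
          refine lintegral_mono fun x => ?_
          rw [lintegral_prod]
          · refine setLIntegral_mono' measurableSet_Icc fun z hz => ?_
            have h1 := translate_le hF x hz
            have h2 : Continuous fun s : ℝ => k * P (x + s • emb z) :=
              continuous_const.mul (hPc.comp (by fun_prop))
            rw [intervalIntegral.integral_of_le zero_le_one] at h1
            rw [← ofReal_integral_eq_lintegral_ofReal]
            · exact ENNReal.ofReal_le_ofReal h1
            · exact (h2.integrableOn_Icc).mono_set Ioc_subset_Icc_self
            · exact ae_of_all _ fun s => mul_nonneg hk (hPnn _)
          · exact (hcontP.comp (Continuous.prodMk_right x)).measurable.ennreal_ofReal.aemeasurable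
      _ = ∫⁻ q, (∫⁻ x, ENNReal.ofReal (k * P (x + q.2 • emb q.1))) ∂κ := by
          rw [lintegral_lintegral_swap]
          exact hcontP.measurable.ennreal_ofReal.aemeasurable
      _ = ∫⁻ _q, (∫⁻ x, ENNReal.ofReal (k * P x)) ∂κ := by
          refine lintegral_congr fun q => ?_
          exact lintegral_add_right_eq_self (fun x => ENNReal.ofReal (k * P x)) _
      _ = _ := by rw [lintegral_const, hκ, mul_comm]
  rw [← ofReal_integral_eq_lintegral_ofReal hFi (ae_of_all _ fun x => sq_nonneg _),
    ← ofReal_integral_eq_lintegral_ofReal (hPi.const_mul k)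
      (ae_of_all _ fun x => mul_nonneg hk (hPnn x)),
    ← ENNReal.ofReal_mul hV.le, ← ENNReal.ofReal_mul (by positivity),
    integral_const_mul] at key
  have hPint : 0 ≤ ∫ x, P x := integral_nonneg hPnn
  rw [ENNReal.ofReal_le_ofReal_iff (by positivity)] at key
  have : V₀ * (∫ x, F x ^ 2) ≤ V₀ * (2 * k * ∫ x, P x) := by linarith
  exact le_of_mul_le_mul_left this hV

/-! ### Extension by zero and absorption of cross terms -/

theorem integrableOn_of_continuousOn_compact {X : Type*} [TopologicalSpace X] [T2Space X]
    [MeasurableSpace X] [OpensMeasurableSpace X] {μ : Measure X}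
    [IsFiniteMeasureOnCompacts μ]
    {U K : Set X} {f : X → ℝ} (hU : MeasurableSet U) (hK : IsCompact K)
    (hf : ContinuousOn f K) (h0 : ∀ x ∈ U, x ∉ K → f x = 0) : IntegrableOn f U μ :=
  (hf.integrableOn_compact hK).of_forall_sdiff_eq_zero hU fun x hx => h0 x hx.1 hx.2

theorem indicator_contDiff {n : ℕ} {U K : Set (Fin (n + 1) → ℝ)} (hU : IsOpen U)
    (hK : IsCompact K) (hKU : K ⊆ U) {f : (Fin (n + 1) → ℝ) → ℝ} (hf : ContDiffOn ℝ 1 f U)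
    (h0 : ∀ x ∈ U, x ∉ K → f x = 0) : ContDiff ℝ 1 (U.indicator f) := by
  rw [contDiff_iff_contDiffAt]
  intro x
  by_cases hx : x ∈ U
  · refine (hf.contDiffAt (hU.mem_nhds hx)).congr_of_eventuallyEq ?_
    filter_upwards [hU.mem_nhds hx] with y hy
    rw [indicator_of_mem hy]
  · refine (contDiffAt_const (c := (0 : ℝ))).congr_of_eventuallyEq ?_
    filter_upwards [hK.isClosed.isOpen_compl.mem_nhds fun h => hx (hKU h)] with y hy
    by_cases hyU : y ∈ U
    · rw [indicator_of_mem hyU, h0 y hyU hy]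
    · rw [indicator_of_notMem hyU]

theorem indicator_hasCompactSupport {n : ℕ} {U K : Set (Fin (n + 1) → ℝ)}
    (hK : IsCompact K) {f : (Fin (n + 1) → ℝ) → ℝ}
    (h0 : ∀ x ∈ U, x ∉ K → f x = 0) : HasCompactSupport (U.indicator f) := by
  refine HasCompactSupport.intro hK fun x hx => ?_
  by_cases hxU : x ∈ U
  · rw [indicator_of_mem hxU, h0 x hxU hx]
  · rw [indicator_of_notMem hxU]

theorem pd_indicator {n : ℕ} {U K : Set (Fin (n + 1) → ℝ)} (hU : IsOpen U)
    (hK : IsCompact K) (hKU : K ⊆ U) {f : (Fin (n + 1) → ℝ) → ℝ}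
    (h0 : ∀ x ∈ U, x ∉ K → f x = 0) (i : Fin (n + 1)) :
    pd i (U.indicator f) = U.indicator (pd i f) := by
  ext x
  unfold pd
  by_cases hx : x ∈ U
  · rw [indicator_of_mem hx, Filter.EventuallyEq.fderiv_eq (f₁ := U.indicator f) (f := f)]
    filter_upwards [hU.mem_nhds hx] with y hy
    rw [indicator_of_mem hy]
  · rw [indicator_of_notMem hx, Filter.EventuallyEq.fderiv_eq (f₁ := U.indicator f) (f := fun _ => 0)]
    · simp
    filter_upwards [hK.isClosed.isOpen_compl.mem_nhds fun h => hx (hKU h)] with y hy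
    by_cases hyU : y ∈ U
    · rw [indicator_of_mem hyU, h0 y hyU hy]
    · rw [indicator_of_notMem hyU]

/-- Divergence theorem on an open set with arbitrary boundary, for functions vanishing outside a
compact subset. -/
theorem integral_pd_eq_zero {n : ℕ} {U K : Set (Fin (n + 1) → ℝ)} (hU : IsOpen U)
    (hK : IsCompact K) (hKU : K ⊆ U) {f : (Fin (n + 1) → ℝ) → ℝ} (hf : ContDiffOn ℝ 1 f U)
    (h0 : ∀ x ∈ U, x ∉ K → f x = 0) (i : Fin (n + 1)) :
    IntegrableOn (pd i f) U ∧ ∫ x in U, pd i f x = 0 := by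
  have hF := indicator_contDiff hU hK hKU hf h0
  have hc := indicator_hasCompactSupport hK h0
  have hint : Integrable (pd i (U.indicator f)) := by
    refine Continuous.integrable_of_hasCompactSupport
      ((hF.continuous_fderiv (by norm_num)).clm_apply continuous_const) ?_
    refine (hc.fderiv (𝕜 := ℝ)).mono fun x hx => ?_
    contrapose! hx
    simp only [Function.mem_support, not_not] at hx ⊢
    simp [pd, hx]
  have hzero : ∫ x, pd i (U.indicator f) x = 0 := by
    have := integral_mul_fderiv_eq_neg_fderiv_mul_of_integrable (μ := volume)
      (f := fun _ : Fin (n + 1) → ℝ => (1 : ℝ)) (g := U.indicator f) (v := Pi.single i 1)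
      (by simp) (by simp only [one_mul]; exact hint)
      (by simpa using hF.continuous.integrable_of_hasCompactSupport hc)
      (fun x _ => differentiableAt_const _) (fun x _ => hF.differentiable (by norm_num) x)
    simpa [pd] using this
  rw [pd_indicator hU hK hKU h0 i] at hint hzero
  rw [integral_indicator hU.measurableSet] at hzero
  exact ⟨(integrable_indicator_iff hU.measurableSet).1 hint, hzero⟩

theorem isCompact_slab {n : ℕ} {Ω₀ : Set (Fin n → ℝ)} (hb : Bornology.IsBounded Ω₀) (R : ℝ) :
    IsCompact {x | x ∈ closure (strip Ω₀) ∧ |x 0| ≤ R} := by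
  obtain ⟨M, hM⟩ := hb.exists_norm_le
  refine (isCompact_Icc (a := fun _ : Fin (n + 1) => -(max M R))
    (b := fun _ => max M R)).of_isClosed_subset ?_ ?_
  · exact isClosed_closure.inter
      (isClosed_le (f := fun x : Fin (n + 1) → ℝ => |x 0|) (by fun_prop) continuous_const)
  · rintro x ⟨hx, hxR⟩
    have hx' : ∀ i : Fin n, |x i.succ| ≤ M := by
      have hcl : IsClosed {x : Fin (n + 1) → ℝ | ∀ i : Fin n, |x i.succ| ≤ M} := by
        simp only [ofPred_forall]
        exact isClosed_iInter fun i => isClosed_le (by fun_prop) continuous_const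
      refine closure_minimal (fun y hy i => ?_) hcl hx
      exact (norm_le_pi_norm (fun i : Fin n => y i.succ) i).trans (hM _ hy)
    have : ∀ i, |x i| ≤ max M R := by
      intro i
      refine Fin.cases (hxR.trans (le_max_right _ _)) (fun j => (hx' j).trans (le_max_left _ _)) i
    exact ⟨fun i => (abs_le.1 (this i)).1, fun i => (abs_le.1 (this i)).2⟩

theorem integrableOn_strip {n : ℕ} {Ω₀ : Set (Fin n → ℝ)} (hΩ : IsOpen Ω₀)
    (hb : Bornology.IsBounded Ω₀) {R : ℝ} {f : (Fin (n + 1) → ℝ) → ℝ}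
    (hf : ContinuousOn f (closure (strip Ω₀))) (h0 : ∀ x, R < |x 0| → f x = 0) :
    IntegrableOn f (strip Ω₀) := by
  refine integrableOn_of_continuousOn_compact (strip_isOpen hΩ).measurableSet
    (isCompact_slab hb R) (hf.mono fun x hx => hx.1) fun x hx hxK => h0 x ?_
  by_contra h
  exact hxK ⟨subset_closure hx, not_lt.1 h⟩

/-- The part of the slab where `v` is at least `δ` is compact and stays inside the strip. -/
theorem superlevel_compact {n : ℕ} {Ω₀ : Set (Fin n → ℝ)}
    (hb : Bornology.IsBounded Ω₀) (R : ℝ) {δ : ℝ} (hδ : 0 < δ) {v : (Fin (n + 1) → ℝ) → ℝ}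
    (hv : ContinuousOn v (closure (strip Ω₀))) (hv0 : ∀ x ∈ frontier (strip Ω₀), v x = 0) :
    IsCompact {x | (x ∈ closure (strip Ω₀) ∧ |x 0| ≤ R) ∧ δ ≤ |v x|} ∧
      {x | (x ∈ closure (strip Ω₀) ∧ |x 0| ≤ R) ∧ δ ≤ |v x|} ⊆ strip Ω₀ := by
  constructor
  · refine (isCompact_slab hb R).of_isClosed_subset ?_ fun x hx => hx.1
    exact ((hv.mono fun x hx => hx.1).abs).preimage_isClosed_of_isClosed
      (isCompact_slab hb R).isClosed isClosed_Ici
  · rintro x ⟨⟨hx, -⟩, hd⟩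
    by_contra h
    have := hv0 x ⟨hx, fun h' => h (interior_subset h')⟩
    rw [this, abs_zero] at hd
    linarith

/-- Pointwise absorption of the cross terms by the Young inequality: half of the elliptic term
`φ² g Q ≥ lam φ² g G` pays for the term with `φ'` and for the drift term. -/
theorem absorb {lam Lam N G S g h v φ φ' q Bt Q c ε : ℝ} (hlam : 0 < lam) (hN : 0 < N)
    (hg : 0 ≤ g) (hS : 0 ≤ S) (hSG : S ^ 2 ≤ N * G) (hh : h ^ 2 ≤ v ^ 2 * g)
    (hvh : 0 ≤ v * h) (hvh' : v * h ≤ v ^ 2) (hε : 0 ≤ ε)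
    (hq : |q| ≤ Lam * S) (hB : |Bt| ≤ Real.sqrt ε * S) (hQ : lam * G ≤ Q)
    (hc : c ≤ ε) :
    -(2 * φ * φ' * h * q) - φ ^ 2 * g * Q + φ ^ 2 * h * Bt + φ ^ 2 * h * (c * v)
      ≤ -(lam / 2) * (φ ^ 2 * g * G) + ε * (N / lam + 1) * (φ ^ 2 * v ^ 2)
        + 4 * N * Lam ^ 2 / lam * (φ' ^ 2 * v ^ 2) := by
  obtain ⟨s, hs, rfl⟩ : ∃ s, 0 ≤ s ∧ g = s ^ 2 := ⟨Real.sqrt g, Real.sqrt_nonneg _, (Real.sq_sqrt hg).symm⟩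
  have hhs : |h| ≤ |v| * s := by
    have : h ^ 2 ≤ (|v| * s) ^ 2 := by rw [mul_pow, sq_abs]; exact hh
    exact abs_le_of_sq_le_sq this (by positivity)
  set A := |φ| * s * S with hA
  have hAsq : A ^ 2 ≤ N * (φ ^ 2 * s ^ 2 * G) := by
    have : A ^ 2 = φ ^ 2 * s ^ 2 * S ^ 2 := by rw [hA, mul_pow, mul_pow, sq_abs]
    rw [this]
    have := mul_le_mul_of_nonneg_left hSG (show 0 ≤ φ ^ 2 * s ^ 2 by positivity)
    linarith
  have hA0 : 0 ≤ A := by positivity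
  set P := φ ^ 2 * s ^ 2 * G with hP
  have hPA : lam / (4 * N) * A ^ 2 ≤ lam / 4 * P := by
    have := mul_le_mul_of_nonneg_left hAsq (show 0 ≤ lam / (4 * N) by positivity)
    refine this.trans (le_of_eq ?_)
    field_simp
  have young : ∀ x y : ℝ, 2 * x * y ≤ lam / (4 * N) * x ^ 2 + 4 * N / lam * y ^ 2 := by
    intro x y
    have : 0 ≤ (lam * x - 4 * N * y) ^ 2 / (4 * N * lam) := by positivity
    have e : (lam * x - 4 * N * y) ^ 2 / (4 * N * lam)
      = lam / (4 * N) * x ^ 2 + 4 * N / lam * y ^ 2 - 2 * x * y := by field_simp; ring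
    linarith
  have T1 : -(2 * φ * φ' * h * q) ≤ lam / 4 * P + 4 * N * Lam ^ 2 / lam * (φ' ^ 2 * v ^ 2) := by
    have e1 : -(2 * φ * φ' * h * q) ≤ 2 * A * (|φ'| * |v| * Lam) := by
      calc -(2 * φ * φ' * h * q) ≤ |2 * φ * φ' * h * q| := neg_le_abs _
        _ = 2 * |φ| * |φ'| * |h| * |q| := by simp [abs_mul]
        _ ≤ 2 * |φ| * |φ'| * (|v| * s) * (Lam * S) := by gcongr
        _ = _ := by rw [hA]; ring
    have e2 := young A (|φ'| * |v| * Lam)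
    have e3 : (|φ'| * |v| * Lam) ^ 2 = Lam ^ 2 * (φ' ^ 2 * v ^ 2) := by
      rw [mul_pow, mul_pow, sq_abs, sq_abs]; ring
    rw [e3] at e2
    have e4 : 4 * N / lam * (Lam ^ 2 * (φ' ^ 2 * v ^ 2)) = 4 * N * Lam ^ 2 / lam * (φ' ^ 2 * v ^ 2) := by
      ring
    linarith
  have T2 : φ ^ 2 * h * Bt ≤ lam / 4 * P + ε * (N / lam) * (φ ^ 2 * v ^ 2) := by
    have e1 : φ ^ 2 * h * Bt ≤ 2 * A * (|φ| * |v| * Real.sqrt ε / 2) := by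
      calc φ ^ 2 * h * Bt ≤ |φ ^ 2 * h * Bt| := le_abs_self _
        _ = |φ| ^ 2 * |h| * |Bt| := by simp [abs_mul]
        _ ≤ |φ| ^ 2 * (|v| * s) * (Real.sqrt ε * S) := by gcongr
        _ = _ := by rw [hA]; ring
    have e2 := young A (|φ| * |v| * Real.sqrt ε / 2)
    have e3 : (|φ| * |v| * Real.sqrt ε / 2) ^ 2 = ε * (φ ^ 2 * v ^ 2) / 4 := by
      rw [div_pow, mul_pow, mul_pow, sq_abs, sq_abs, Real.sq_sqrt hε]; ring
    rw [e3] at e2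
    have e4 : 4 * N / lam * (ε * (φ ^ 2 * v ^ 2) / 4) = ε * (N / lam) * (φ ^ 2 * v ^ 2) := by
      ring
    linarith
  have T3 : φ ^ 2 * h * (c * v) ≤ ε * (φ ^ 2 * v ^ 2) := by
    have e1 : c * (v * h) ≤ ε * v ^ 2 :=
      (mul_le_mul_of_nonneg_right hc hvh).trans (mul_le_mul_of_nonneg_left hvh' hε)
    have := mul_le_mul_of_nonneg_left e1 (sq_nonneg φ)
    nlinarith
  have T4 : lam * P ≤ φ ^ 2 * s ^ 2 * Q := by
    have := mul_le_mul_of_nonneg_left hQ (show 0 ≤ φ ^ 2 * s ^ 2 by positivity)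
    rw [hP]; linarith
  linarith

/-! ### Energy inequality at a fixed time -/

theorem pd_mul {n : ℕ} (i : Fin (n + 1)) {f g : (Fin (n + 1) → ℝ) → ℝ} {x : Fin (n + 1) → ℝ}
    (hf : DifferentiableAt ℝ f x) (hg : DifferentiableAt ℝ g x) :
    pd i (fun y => f y * g y) x = f x * pd i g x + g x * pd i f x := by
  unfold pd
  rw [fderiv_fun_mul hf hg]
  simp

theorem pd_comp {n : ℕ} (i : Fin (n + 1)) {f : (Fin (n + 1) → ℝ) → ℝ} {x : Fin (n + 1) → ℝ}
    {p : ℝ → ℝ} {d : ℝ} (hf : DifferentiableAt ℝ f x) (hp : HasDerivAt p d (f x)) :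
    pd i (fun y => p (f y)) x = d * pd i f x := by
  unfold pd
  have h : HasFDerivAt (fun y => p (f y)) (d • fderiv ℝ f x) x :=
    hp.comp_hasFDerivAt x hf.hasFDerivAt
  rw [h.fderiv]
  simp

theorem pd_coord {n : ℕ} (i : Fin (n + 1)) (x : Fin (n + 1) → ℝ) :
    pd i (fun y => y 0) x = if i = 0 then 1 else 0 := by
  unfold pd
  rw [(hasFDerivAt_apply (0 : Fin (n + 1)) x).fderiv]
  simp [Pi.single_apply, eq_comm]

theorem integral_add_four {X : Type*} [MeasurableSpace X] {μ : Measure X}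
    {f₁ f₂ f₃ f₄ : X → ℝ} {k₂ k₃ k₄ : ℝ} (h₁ : Integrable f₁ μ) (h₂ : Integrable f₂ μ)
    (h₃ : Integrable f₃ μ) (h₄ : Integrable f₄ μ) :
    ∫ x, (f₁ x + k₂ * f₂ x + k₃ * f₃ x + k₄ * f₄ x) ∂μ
      = (∫ x, f₁ x ∂μ) + k₂ * (∫ x, f₂ x ∂μ) + k₃ * (∫ x, f₃ x ∂μ) + k₄ * ∫ x, f₄ x ∂μ := by
  have i₂ : Integrable (fun x => k₂ * f₂ x) μ := h₂.const_mul k₂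
  have i₃ : Integrable (fun x => k₃ * f₃ x) μ := h₃.const_mul k₃
  have i₄ : Integrable (fun x => k₄ * f₄ x) μ := h₄.const_mul k₄
  have i₁₂ : Integrable (fun x => f₁ x + k₂ * f₂ x) μ := h₁.add i₂
  have i₁₂₃ : Integrable (fun x => f₁ x + k₂ * f₂ x + k₃ * f₃ x) μ := i₁₂.add i₃
  rw [integral_add i₁₂₃ i₄, integral_add i₁₂ i₃, integral_add h₁ i₂, integral_const_mul,
    integral_const_mul, integral_const_mul]

/-- Pointwise energy inequality: the product rule writes `φ² h(v) Lv` as a divergence minus the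
elliptic term `φ² g(v) ⟨a∇v, ∇v⟩` plus cross terms, to which `absorb` applies. -/
theorem pointwise_energy {n : ℕ} {Ω₀ : Set (Fin n → ℝ)} (hΩ : IsOpen Ω₀) {lam Lam : ℝ}
    (hlam : 0 < lam) {a : (Fin (n + 1) → ℝ) → Fin (n + 1) → Fin (n + 1) → ℝ}
    {b : (Fin (n + 1) → ℝ) → Fin (n + 1) → ℝ} {c : (Fin (n + 1) → ℝ) → ℝ}
    (hg : GoodCoeffs Ω₀ lam Lam a b c) {ε : ℝ} (hε : 0 ≤ ε) (hs : Smallness Ω₀ b c ε)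
    {v : (Fin (n + 1) → ℝ) → ℝ} (hv2 : ContDiffOn ℝ 2 v (strip Ω₀))
    {φ : ℝ → ℝ} (hφ : ContDiff ℝ 1 φ) {δ : ℝ} (hδ : 0 < δ)
    {x : Fin (n + 1) → ℝ} (hx : x ∈ strip Ω₀) :
    hfun δ (v x) * Lop a b c v x * φ (x 0) ^ 2 ≤
      (∑ i, pd i (fun y => (φ (y 0) ^ 2 * hfun δ (v y)) * ∑ j, a y i j * pd j v y) x)
      + -(lam / 2) * (φ (x 0) ^ 2 * gfun δ (v x) * ∑ i, pd i v x ^ 2)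
      + ε * ((n + 1) / lam + 1) * (φ (x 0) ^ 2 * v x ^ 2)
      + 4 * (n + 1) * Lam ^ 2 / lam * (deriv φ (x 0) ^ 2 * v x ^ 2) := by
  have hU := strip_isOpen hΩ
  have hnh := hU.mem_nhds hx
  have hvd : DifferentiableAt ℝ v x := (hv2.contDiffAt hnh).differentiableAt (by norm_num)
  have hφd : HasDerivAt φ (deriv φ (x 0)) (x 0) :=
    (hφ.differentiable (by norm_num) _).hasDerivAt
  have hx0 : DifferentiableAt ℝ (fun y : Fin (n + 1) → ℝ => y 0) x := by fun_prop
  have hqd : ∀ i, DifferentiableAt ℝ (fun y => ∑ j, a y i j * pd j v y) x := fun i =>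
    ((flux_contDiffOn hU hg.a_reg hv2 i).contDiffAt hnh).differentiableAt (by norm_num)
  have hφ2 : HasDerivAt (fun s => φ s ^ 2) (2 * φ (x 0) * deriv φ (x 0)) (x 0) := by
    simpa using hφd.fun_pow 2
  have d1 : DifferentiableAt ℝ (fun y : Fin (n + 1) → ℝ => φ (y 0) ^ 2) x :=
    DifferentiableAt.comp (g := fun s => φ s ^ 2) x hφ2.differentiableAt hx0
  have d2 : DifferentiableAt ℝ (fun y => hfun δ (v y)) x :=
    ((hfun_deriv hδ (v x)).comp_hasFDerivAt x hvd.hasFDerivAt).differentiableAt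
  have e1 : ∀ i, pd i (fun y => (φ (y 0) ^ 2 * hfun δ (v y)) * ∑ j, a y i j * pd j v y) x
      = φ (x 0) ^ 2 * hfun δ (v x) * pd i (fun y => ∑ j, a y i j * pd j v y) x
        + φ (x 0) ^ 2 * gfun δ (v x) * ((∑ j, a x i j * pd j v x) * pd i v x)
        + (if i = 0 then 2 * φ (x 0) * deriv φ (x 0) * hfun δ (v x) * ∑ j, a x i j * pd j v x
            else 0) := by
    intro i
    rw [pd_mul i (d1.fun_mul d2) (hqd i), pd_mul i d1 d2, pd_comp i hvd (hfun_deriv hδ (v x)),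
      pd_comp i hx0 hφ2, pd_coord]
    split_ifs <;> ring
  have e2 : (∑ i, pd i (fun y => (φ (y 0) ^ 2 * hfun δ (v y)) * ∑ j, a y i j * pd j v y) x)
      = φ (x 0) ^ 2 * hfun δ (v x) * (∑ i, pd i (fun y => ∑ j, a y i j * pd j v y) x)
        + φ (x 0) ^ 2 * gfun δ (v x) * (∑ i, (∑ j, a x i j * pd j v x) * pd i v x)
        + 2 * φ (x 0) * deriv φ (x 0) * hfun δ (v x) * ∑ j, a x 0 j * pd j v x := by
    simp only [e1, Finset.sum_add_distrib, ← Finset.mul_sum]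
    simp
  have hSG : (∑ i, |pd i v x|) ^ 2 ≤ ((n : ℝ) + 1) * ∑ i, pd i v x ^ 2 := by
    have := sq_sum_le_card_mul_sum_sq (s := Finset.univ) (f := fun i => |pd i v x|)
    simpa using this
  have hq : |∑ j, a x 0 j * pd j v x| ≤ Lam * ∑ i, |pd i v x| := by
    rw [Finset.mul_sum]
    refine (Finset.abs_sum_le_sum_abs _ _).trans (Finset.sum_le_sum fun j _ => ?_)
    rw [abs_mul]
    exact mul_le_mul_of_nonneg_right (hg.a_bdd x hx 0 j) (abs_nonneg _)
  have hB : |∑ j, b x j * pd j v x| ≤ Real.sqrt ε * ∑ i, |pd i v x| := by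
    rw [Finset.mul_sum]
    refine (Finset.abs_sum_le_sum_abs _ _).trans (Finset.sum_le_sum fun j _ => ?_)
    rw [abs_mul]
    exact mul_le_mul_of_nonneg_right ((hs x hx).1 j) (abs_nonneg _)
  have hQ : lam * ∑ i, pd i v x ^ 2 ≤ ∑ i, (∑ j, a x i j * pd j v x) * pd i v x := by
    refine (hg.elliptic x hx fun i => pd i v x).trans (le_of_eq ?_)
    refine Finset.sum_congr rfl fun i _ => ?_
    rw [Finset.sum_mul]
    exact Finset.sum_congr rfl fun j _ => by ring
  have := absorb (φ := φ (x 0)) (φ' := deriv φ (x 0)) hlam (show (0 : ℝ) < n + 1 by positivity)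
    (gfun_nonneg hδ (v x)) (Finset.sum_nonneg fun i _ => abs_nonneg _) hSG
    (hfun_sq_le hδ (v x)) (mul_hfun_nonneg hδ _) (mul_hfun_le hδ _) hε hq hB hQ (hs x hx).2
  rw [e2]
  unfold Lop
  linarith

/-- Energy inequality at a fixed time. The divergence integrates to zero, and the gradient term is
bounded by the Poincaré inequality for `φ h(v)` extended by zero. Integrability of the left-hand side
is a hypothesis because `b` and `c` need not be measurable. -/
theorem fixed_time {n : ℕ} {Ω₀ : Set (Fin n → ℝ)} (hΩ : IsOpen Ω₀)
    (hb : Bornology.IsBounded Ω₀) {V₀ ρ : ℝ} (hV : 0 < V₀) (hρ : 0 < ρ) (hρV : ρ ^ n = 2 * V₀)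
    (hvol : volume Ω₀ = ENNReal.ofReal V₀) {lam Lam : ℝ}
    (hlam : 0 < lam) {a : (Fin (n + 1) → ℝ) → Fin (n + 1) → Fin (n + 1) → ℝ}
    {b : (Fin (n + 1) → ℝ) → Fin (n + 1) → ℝ} {c : (Fin (n + 1) → ℝ) → ℝ}
    (hg : GoodCoeffs Ω₀ lam Lam a b c) {ε : ℝ} (hε : 0 ≤ ε) (hs : Smallness Ω₀ b c ε)
    {κ : ℝ} (hκ0 : 0 ≤ κ) (hκ : κ * (2 * (n * ρ ^ 2)) ≤ lam / 2)
    (hεκ : ε * ((n + 1) / lam + 1) ≤ κ / 8)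
    {v : (Fin (n + 1) → ℝ) → ℝ} (hv2 : ContDiffOn ℝ 2 v (strip Ω₀))
    (hv : ContinuousOn v (closure (strip Ω₀))) (hv0 : ∀ x ∈ frontier (strip Ω₀), v x = 0)
    {φ : ℝ → ℝ} (hφ : ContDiff ℝ 1 φ) {R : ℝ} (hφR : ∀ s, R < |s| → φ s = 0)
    {δ : ℝ} (hδ : 0 < δ)
    (hint : IntegrableOn (fun x => hfun δ (v x) * Lop a b c v x * φ (x 0) ^ 2) (strip Ω₀)) :
    ∫ x in strip Ω₀, hfun δ (v x) * Lop a b c v x * φ (x 0) ^ 2 ≤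
      -(κ / 8) * (∫ x in strip Ω₀, φ (x 0) ^ 2 * v x ^ 2)
      + 4 * (n + 1) * Lam ^ 2 / lam * (∫ x in strip Ω₀, deriv φ (x 0) ^ 2 * v x ^ 2)
      + δ ^ 2 * (2 * κ * ∫ x in strip Ω₀, φ (x 0) ^ 2) := by
  have hU := strip_isOpen hΩ
  obtain ⟨hK, hKU⟩ := superlevel_compact hb R hδ hv hv0
  set K := {x | (x ∈ closure (strip Ω₀) ∧ |x 0| ≤ R) ∧ δ ≤ |v x|} with hKdef
  have hout : ∀ x ∈ strip Ω₀, x ∉ K → φ (x 0) = 0 ∨ |v x| ≤ δ := by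
    intro x hx hxK
    by_contra! hcon
    refine hxK ⟨⟨subset_closure hx, ?_⟩, hcon.2.le⟩
    by_contra h
    exact hcon.1 (hφR _ (not_le.1 h))
  have hdφR : ∀ s, R < |s| → deriv φ s = 0 := by
    intro s hs
    have : φ =ᶠ[nhds s] fun _ => 0 := by
      filter_upwards [(isOpen_lt continuous_const continuous_abs).mem_nhds hs] with y hy
      exact hφR y hy
    rw [this.deriv_eq]; simp
  have hdφ : Continuous (deriv φ) := hφ.continuous_deriv (by norm_num)
  have hcoord : ContDiff ℝ 1 fun y : Fin (n + 1) → ℝ => φ (y 0) :=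
    hφ.comp (contDiff_apply ℝ ℝ 0)
  have hcoordc : Continuous fun y : Fin (n + 1) → ℝ => φ (y 0) := hcoord.continuous
  have hdcoordc : Continuous fun y : Fin (n + 1) → ℝ => deriv φ (y 0) :=
    hdφ.comp (continuous_apply 0)
  have hv1 : ContDiffOn ℝ 1 v (strip Ω₀) := hv2.of_le (by norm_num)
  have hhv : ContDiffOn ℝ 1 (fun y => hfun δ (v y)) (strip Ω₀) :=
    (hfun_contDiff hδ).comp_contDiffOn hv1
  have hgv : ContinuousOn (fun y => gfun δ (v y)) (strip Ω₀) :=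
    (gfun_cont hδ).comp_continuousOn hv1.continuousOn
  have hGc : ContinuousOn (fun x => ∑ i, pd i v x ^ 2) (strip Ω₀) :=
    continuousOn_finsetSum _ fun i _ => (pd_continuousOn hU hv1 i).pow 2
  have iX : ∀ i, IntegrableOn
      (pd i (fun y => (φ (y 0) ^ 2 * hfun δ (v y)) * ∑ j, a y i j * pd j v y)) (strip Ω₀) ∧
      ∫ x in strip Ω₀,
        pd i (fun y => (φ (y 0) ^ 2 * hfun δ (v y)) * ∑ j, a y i j * pd j v y) x = 0 := by
    intro i
    refine integral_pd_eq_zero hU hK hKU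
      (((hcoord.contDiffOn.pow 2).mul hhv).mul (flux_contDiffOn hU hg.a_reg hv2 i)) ?_ i
    intro x hx hxK
    rcases hout x hx hxK with h | h
    · simp [h]
    · simp [hfun_eq_zero hδ h]
  have iG : IntegrableOn (fun x => φ (x 0) ^ 2 * gfun δ (v x) * ∑ i, pd i v x ^ 2)
      (strip Ω₀) := by
    refine integrableOn_of_continuousOn_compact hU.measurableSet hK
      ((((hcoordc.continuousOn.pow 2).mul hgv).mul hGc).mono hKU) ?_
    intro x hx hxK
    rcases hout x hx hxK with h | h
    · simp [h]
    · simp [gfun_eq_zero hδ h]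
  have iv : IntegrableOn (fun x => φ (x 0) ^ 2 * v x ^ 2) (strip Ω₀) :=
    integrableOn_strip hΩ hb (R := R) ((hcoordc.continuousOn.pow 2).mul (hv.pow 2))
      fun x hx => by simp [hφR _ hx]
  have idv : IntegrableOn (fun x => deriv φ (x 0) ^ 2 * v x ^ 2) (strip Ω₀) :=
    integrableOn_strip hΩ hb (R := R) ((hdcoordc.continuousOn.pow 2).mul (hv.pow 2))
      fun x hx => by simp [hdφR _ hx]
  have iφ : IntegrableOn (fun x : Fin (n + 1) → ℝ => φ (x 0) ^ 2) (strip Ω₀) :=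
    integrableOn_strip hΩ hb (R := R) (hcoordc.continuousOn.pow 2)
      fun x hx => by simp [hφR _ hx]
  have ih : IntegrableOn (fun x => φ (x 0) ^ 2 * hfun δ (v x) ^ 2) (strip Ω₀) :=
    integrableOn_strip hΩ hb (R := R) ((hcoordc.continuousOn.pow 2).mul
      (((hfun_cont hδ).comp_continuousOn hv).pow 2)) fun x hx => by simp [hφR _ hx]
  -- Only `n` of the `n + 1` derivatives enter, so `φ(x₀)` is not differentiated.
  have hP : ∫ x in strip Ω₀, φ (x 0) ^ 2 * hfun δ (v x) ^ 2 ≤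
      2 * (n * ρ ^ 2) * ∫ x in strip Ω₀, φ (x 0) ^ 2 * gfun δ (v x) * ∑ i, pd i v x ^ 2 := by
    have hz : ∀ x ∈ strip Ω₀, x ∉ K → φ (x 0) * hfun δ (v x) = 0 := by
      intro x hx hxK
      rcases hout x hx hxK with h | h
      · simp [h]
      · simp [hfun_eq_zero hδ h]
    have h1 := poincare hV hρ hρV hΩ hvol
      (indicator_contDiff hU hK hKU (hcoord.contDiffOn.mul hhv) hz)
      (indicator_hasCompactSupport hK hz) (fun x hx => indicator_of_notMem hx _)
    have h2 : (fun x => (strip Ω₀).indicator (fun x => φ (x 0) * hfun δ (v x)) x ^ 2)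
        = (strip Ω₀).indicator (fun x => φ (x 0) ^ 2 * hfun δ (v x) ^ 2) := by
      ext x
      by_cases hx : x ∈ strip Ω₀
      · simp [indicator_of_mem hx, mul_pow]
      · simp [indicator_of_notMem hx]
    rw [h2, integral_indicator hU.measurableSet] at h1
    refine h1.trans (mul_le_mul_of_nonneg_left ?_ (by positivity))
    rw [← integral_indicator hU.measurableSet]
    refine integral_mono_of_nonneg (ae_of_all _ fun x => Finset.sum_nonneg fun i _ => sq_nonneg _)
      ((integrable_indicator_iff hU.measurableSet).2 iG) (ae_of_all _ fun x => ?_)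
    simp only [pd_indicator hU hK hKU hz]
    by_cases hx : x ∈ strip Ω₀
    · simp only [indicator_of_mem hx]
      have hvd : DifferentiableAt ℝ v x :=
        (hv1.contDiffAt (hU.mem_nhds hx)).differentiableAt (by norm_num)
      have d1 : DifferentiableAt ℝ (fun y : Fin (n + 1) → ℝ => φ (y 0)) x :=
        hcoord.differentiable (by norm_num) x
      have d2 : DifferentiableAt ℝ (fun y => hfun δ (v y)) x :=
        ((hfun_deriv hδ (v x)).comp_hasFDerivAt x hvd.hasFDerivAt).differentiableAt
      have d3 : ∀ i : Fin n, pd i.succ (fun y => φ (y 0) * hfun δ (v y)) x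
          = φ (x 0) * gfun δ (v x) * pd i.succ v x := by
        intro i
        rw [pd_mul _ d1 d2, pd_comp _ hvd (hfun_deriv hδ (v x)),
          pd_comp i.succ (f := fun y : Fin (n + 1) → ℝ => y 0) (by fun_prop)
            (hφ.differentiable (by norm_num) _).hasDerivAt, pd_coord]
        simp [mul_assoc]
      simp only [d3, mul_pow, ← Finset.mul_sum]
      have g0 := gfun_nonneg hδ (v x)
      have g1 := gfun_le_one hδ (v x)
      have hsum : ∑ i : Fin n, pd i.succ v x ^ 2 ≤ ∑ i, pd i v x ^ 2 := by
        rw [Fin.sum_univ_succ (fun i => pd i v x ^ 2)]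
        linarith [sq_nonneg (pd 0 v x)]
      have hsum0 : 0 ≤ ∑ i : Fin n, pd i.succ v x ^ 2 :=
        Finset.sum_nonneg fun i _ => sq_nonneg _
      refine mul_le_mul (mul_le_mul_of_nonneg_left ?_ (sq_nonneg _)) hsum hsum0 (by positivity)
      nlinarith
    · simp [indicator_of_notMem hx]
  have hmono : ∫ x in strip Ω₀, hfun δ (v x) * Lop a b c v x * φ (x 0) ^ 2 ≤
      ∫ x in strip Ω₀,
      ((∑ i, pd i (fun y => (φ (y 0) ^ 2 * hfun δ (v y)) * ∑ j, a y i j * pd j v y) x)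
      + -(lam / 2) * (φ (x 0) ^ 2 * gfun δ (v x) * ∑ i, pd i v x ^ 2)
      + ε * ((n + 1) / lam + 1) * (φ (x 0) ^ 2 * v x ^ 2)
      + 4 * (n + 1) * Lam ^ 2 / lam * (deriv φ (x 0) ^ 2 * v x ^ 2)) := by
    refine setIntegral_mono_on hint ?_ hU.measurableSet fun x hx =>
      pointwise_energy hΩ hlam hg hε hs hv2 hφ hδ hx
    exact (((integrable_finsetSum _ fun i _ => (iX i).1).add (iG.const_mul _)).add
      (iv.const_mul _)).add (idv.const_mul _)
  rw [integral_add_four (integrable_finsetSum _ fun i _ => (iX i).1) iG iv idv,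
    integral_finsetSum _ fun i _ => (iX i).1, Finset.sum_eq_zero (fun i _ => (iX i).2)] at hmono
  have hlow : ∫ x in strip Ω₀, φ (x 0) ^ 2 * v x ^ 2 ≤
      4 * (∫ x in strip Ω₀, φ (x 0) ^ 2 * hfun δ (v x) ^ 2)
        + 8 * δ ^ 2 * ∫ x in strip Ω₀, φ (x 0) ^ 2 := by
    rw [← integral_const_mul, ← integral_const_mul, ← integral_add (ih.const_mul _)
      (iφ.const_mul _)]
    refine setIntegral_mono_on iv ((ih.const_mul _).add (iφ.const_mul _)) hU.measurableSet
      fun x _ => ?_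
    have := mul_le_mul_of_nonneg_left (sq_le_hfun hδ (v x)) (sq_nonneg (φ (x 0)))
    linarith
  have hA0 : 0 ≤ ∫ x in strip Ω₀, φ (x 0) ^ 2 * v x ^ 2 :=
    integral_nonneg fun x => by positivity
  have hG0 : 0 ≤ ∫ x in strip Ω₀, φ (x 0) ^ 2 * gfun δ (v x) * ∑ i, pd i v x ^ 2 :=
    integral_nonneg fun x => mul_nonneg (mul_nonneg (sq_nonneg _) (gfun_nonneg hδ _))
      (Finset.sum_nonneg fun i _ => sq_nonneg _)
  have f1 := mul_le_mul_of_nonneg_left hP hκ0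
  have f2 := mul_le_mul_of_nonneg_right hκ hG0
  have f3 := mul_le_mul_of_nonneg_left hlow hκ0
  have f4 := mul_le_mul_of_nonneg_right hεκ hA0
  linarith

/-! ### Evolution of the energy -/

theorem slice_continuousOn {n : ℕ} {Ω₀ : Set (Fin n → ℝ)}
    {a : (Fin (n + 1) → ℝ) → Fin (n + 1) → Fin (n + 1) → ℝ}
    {b : (Fin (n + 1) → ℝ) → Fin (n + 1) → ℝ} {c : (Fin (n + 1) → ℝ) → ℝ}
    {u : ℝ → (Fin (n + 1) → ℝ) → ℝ} (hu : IsAncientSolution Ω₀ a b c u) {t : ℝ} (ht : t ≤ 0) :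
    ContinuousOn (u t) (closure (strip Ω₀)) :=
  hu.cont.comp (f := fun x => (t, x)) (by fun_prop) fun x hx => ⟨ht, hx⟩

theorem slab_bound {n : ℕ} {Ω₀ : Set (Fin n → ℝ)} (hb : Bornology.IsBounded Ω₀)
    {a : (Fin (n + 1) → ℝ) → Fin (n + 1) → Fin (n + 1) → ℝ}
    {b : (Fin (n + 1) → ℝ) → Fin (n + 1) → ℝ} {c : (Fin (n + 1) → ℝ) → ℝ}
    {u : ℝ → (Fin (n + 1) → ℝ) → ℝ} (hu : IsAncientSolution Ω₀ a b c u) (s R : ℝ)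
    {p : ℝ → ℝ} (hp : Continuous p) :
    ∃ m, 0 ≤ m ∧ ∀ t ∈ Icc s 0, ∀ x ∈ closure (strip Ω₀), |x 0| ≤ R → |p (u t x)| ≤ m := by
  obtain ⟨m, hm⟩ := ((isCompact_Icc (a := s) (b := 0)).prod
    (isCompact_slab hb R)).exists_bound_of_continuousOn
    (hp.comp_continuousOn (hu.cont.mono (prod_mono (fun t ht => ht.2) fun x hx => hx.1)))
  exact ⟨max m 0, le_max_right _ _, fun t ht x hx hR =>
    (hm (t, x) ⟨ht, hx, hR⟩).trans (le_max_left _ _)⟩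

theorem weighted_integrableOn {n : ℕ} {Ω₀ : Set (Fin n → ℝ)} (hΩ : IsOpen Ω₀)
    (hb : Bornology.IsBounded Ω₀) {a : (Fin (n + 1) → ℝ) → Fin (n + 1) → Fin (n + 1) → ℝ}
    {b : (Fin (n + 1) → ℝ) → Fin (n + 1) → ℝ} {c : (Fin (n + 1) → ℝ) → ℝ}
    {u : ℝ → (Fin (n + 1) → ℝ) → ℝ} (hu : IsAncientSolution Ω₀ a b c u)
    {w p : ℝ → ℝ} (hw : Continuous w) (hp : Continuous p) {R : ℝ}
    (hwR : ∀ s, R < |s| → w s = 0) {t : ℝ} (ht : t ≤ 0) :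
    IntegrableOn (fun x => w (x 0) * p (u t x)) (strip Ω₀) :=
  integrableOn_strip hΩ hb (R := R)
    ((hw.comp (continuous_apply 0)).continuousOn.mul
      (hp.comp_continuousOn (slice_continuousOn hu ht))) fun x hx => by simp [hwR _ hx]

/-- Weighted spatial integrals of a continuous function of `u` depend continuously on time. -/
theorem weighted_continuousOn {n : ℕ} {Ω₀ : Set (Fin n → ℝ)} (hΩ : IsOpen Ω₀)
    (hb : Bornology.IsBounded Ω₀) {a : (Fin (n + 1) → ℝ) → Fin (n + 1) → Fin (n + 1) → ℝ}
    {b : (Fin (n + 1) → ℝ) → Fin (n + 1) → ℝ} {c : (Fin (n + 1) → ℝ) → ℝ}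
    {u : ℝ → (Fin (n + 1) → ℝ) → ℝ} (hu : IsAncientSolution Ω₀ a b c u)
    {w p : ℝ → ℝ} (hw : Continuous w) (hp : Continuous p) {R : ℝ}
    (hwR : ∀ s, R < |s| → w s = 0) (s : ℝ) :
    ContinuousOn (fun t => ∫ x in strip Ω₀, w (x 0) * p (u t x)) (Icc s 0) := by
  obtain ⟨m, hm0, hm⟩ := slab_bound hb hu s R hp
  have hU := strip_isOpen hΩ
  refine continuousOn_of_dominated (bound := fun x => |w (x 0)| * m) ?_ ?_ ?_ ?_
  · intro t ht
    exact (weighted_integrableOn hΩ hb hu hw hp hwR ht.2).aestronglyMeasurable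
  · intro t ht
    filter_upwards [ae_restrict_mem hU.measurableSet] with x hx
    rw [Real.norm_eq_abs, abs_mul]
    by_cases hR : |x 0| ≤ R
    · exact mul_le_mul_of_nonneg_left (hm t ht x (subset_closure hx) hR) (abs_nonneg _)
    · simp [hwR _ (not_le.1 hR)]
  · refine integrableOn_strip hΩ hb (R := R) ?_ fun x hx => by simp [hwR _ hx]
    exact (((hw.comp (continuous_apply 0)).abs).mul continuous_const).continuousOn
  · filter_upwards [ae_restrict_mem hU.measurableSet] with x hx
    refine continuousOn_const.mul (hp.comp_continuousOn ?_)
    exact hu.cont.comp (f := fun t => (t, x)) (by fun_prop) fun t ht =>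
      ⟨ht.2, subset_closure hx⟩

theorem Hfun_lipschitz {δ : ℝ} (hδ : 0 < δ) {m x y : ℝ} (hx : |x| ≤ m) (hy : |y| ≤ m) :
    |Hfun δ x - Hfun δ y| ≤ m * |x - y| := by
  have := Convex.norm_image_sub_le_of_norm_hasDerivWithin_le (f := Hfun δ) (f' := hfun δ)
    (s := Icc (-m) m) (C := m) (x := y) (y := x)
    (fun z _ => (Hfun_deriv hδ z).hasDerivWithinAt)
    (fun z hz => (abs_hfun_le' hδ z).trans (abs_le.2 hz)) (convex_Icc _ _)
    (abs_le.1 hy) (abs_le.1 hx)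
  simpa using this

/-- The regularised weighted energy is differentiable from the right, by dominated convergence. The
integrand of the derivative is measurable as a pointwise limit of difference quotients. -/
theorem energy_hasDeriv {n : ℕ} {Ω₀ : Set (Fin n → ℝ)} (hΩ : IsOpen Ω₀)
    (hb : Bornology.IsBounded Ω₀) {lam Lam : ℝ} (hlam : 0 < lam)
    {a : (Fin (n + 1) → ℝ) → Fin (n + 1) → Fin (n + 1) → ℝ}
    {b : (Fin (n + 1) → ℝ) → Fin (n + 1) → ℝ} {c : (Fin (n + 1) → ℝ) → ℝ}
    (hg : GoodCoeffs Ω₀ lam Lam a b c)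
    {u : ℝ → (Fin (n + 1) → ℝ) → ℝ} (hu : IsAncientSolution Ω₀ a b c u)
    {φ : ℝ → ℝ} (hφ : Continuous φ) {R : ℝ} (hφR : ∀ s, R < |s| → φ s = 0)
    {δ : ℝ} (hδ : 0 < δ) {t₀ : ℝ} (ht₀ : t₀ < 0) :
    IntegrableOn (fun x => hfun δ (u t₀ x) * Lop a b c (u t₀) x * φ (x 0) ^ 2) (strip Ω₀) ∧
    HasDerivWithinAt (fun t => ∫ x in strip Ω₀, φ (x 0) ^ 2 * Hfun δ (u t x))
      (∫ x in strip Ω₀, hfun δ (u t₀ x) * Lop a b c (u t₀) x * φ (x 0) ^ 2) (Ici t₀) t₀ := by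
  have hU := strip_isOpen hΩ
  have hφ2 : Continuous fun s => φ s ^ 2 := hφ.pow 2
  have hφ2R : ∀ s, R < |s| → φ s ^ 2 = 0 := fun s hs => by simp [hφR s hs]
  obtain ⟨m, hm0, hm⟩ := slab_bound hb hu t₀ R continuous_id
  -- Away from the compact set `{|u t₀| ≥ δ / 2}`, `u` stays below the threshold `δ` for a short time.
  obtain ⟨hK, hKU⟩ := superlevel_compact hb R (half_pos hδ) (slice_continuousOn hu ht₀.le)
    (hu.bdry t₀ ht₀.le)
  obtain ⟨C, hC⟩ := time_lipschitz hΩ hlam hg hu hK hKU ht₀.le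
  have hunif := (((isCompact_Icc (a := t₀) (b := 0)).prod
    (isCompact_slab hb R)).uniformContinuousOn_of_continuous
    (hu.cont.mono (prod_mono (fun t ht => ht.2) fun x hx => hx.1)))
  rw [Metric.uniformContinuousOn_iff] at hunif
  obtain ⟨η, hη, hunif⟩ := hunif (δ / 2) (half_pos hδ)
  -- Difference quotients; `min t 0` keeps the time in the range where `u` is known to be continuous.
  let f : ℝ → (Fin (n + 1) → ℝ) → ℝ := fun t x =>
    (t - t₀)⁻¹ * (φ (x 0) ^ 2 * Hfun δ (u (min t 0) x) - φ (x 0) ^ 2 * Hfun δ (u t₀ x))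
  have hnear : ∀ᶠ t in nhdsWithin t₀ (Ioi t₀), t ∈ Ioo t₀ (min 0 (t₀ + η)) :=
    Ioo_mem_nhdsGT (lt_min ht₀ (by linarith))
  have hfint : ∀ t, IntegrableOn (f t) (strip Ω₀) := fun t =>
    ((weighted_integrableOn hΩ hb hu hφ2 (Hfun_cont hδ) hφ2R (min_le_right t 0)).sub
      (weighted_integrableOn hΩ hb hu hφ2 (Hfun_cont hδ) hφ2R ht₀.le)).const_mul _
  have hbd : ∀ᶠ t in nhdsWithin t₀ (Ioi t₀), ∀ x ∈ strip Ω₀,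
      ‖f t x‖ ≤ m * |C| * φ (x 0) ^ 2 := by
    filter_upwards [hnear] with t ht x hx
    have ht0 : t ≤ 0 := (ht.2.trans_le (min_le_left _ _)).le
    have hpos : 0 < t - t₀ := by linarith [ht.1]
    simp only [f, min_eq_left ht0, ← mul_sub, Real.norm_eq_abs, abs_mul, abs_inv,
      abs_of_pos hpos, abs_of_nonneg (sq_nonneg (φ (x 0)))]
    by_cases hR : |x 0| ≤ R
    swap
    · simp [hφR _ (not_le.1 hR)]
    have hxc : x ∈ closure (strip Ω₀) := subset_closure hx
    have hkey : |Hfun δ (u t x) - Hfun δ (u t₀ x)| ≤ m * |C| * (t - t₀) := by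
      by_cases hxK : δ / 2 ≤ |u t₀ x|
      · refine (Hfun_lipschitz hδ (hm t ⟨ht.1.le, ht0⟩ x hxc hR)
          (hm t₀ ⟨le_rfl, ht₀.le⟩ x hxc hR)).trans ?_
        rw [mul_assoc]
        refine mul_le_mul_of_nonneg_left ?_ hm0
        exact (hC x ⟨⟨hxc, hR⟩, hxK⟩ t ⟨ht.1.le, ht0⟩).trans
          (mul_le_mul_of_nonneg_right (le_abs_self C) hpos.le)
      · have h1 := hunif (t, x) ⟨⟨ht.1.le, ht0⟩, hxc, hR⟩ (t₀, x) ⟨⟨le_rfl, ht₀.le⟩, hxc, hR⟩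
          (by
            have : t < t₀ + η := ht.2.trans_le (min_le_right _ _)
            rw [Prod.dist_eq, dist_self, Real.dist_eq, abs_of_pos hpos]
            exact max_lt (by linarith) hη)
        rw [Real.dist_eq] at h1
        have h2 := not_le.1 hxK
        have h3 : |u t x| ≤ |u t x - u t₀ x| + |u t₀ x| := by
          simpa using abs_add_le (u t x - u t₀ x) (u t₀ x)
        rw [Hfun_eq_zero hδ (by linarith), Hfun_eq_zero hδ (by linarith)]
        simp only [sub_self, abs_zero]
        positivity
    calc (t - t₀)⁻¹ * (φ (x 0) ^ 2 * |Hfun δ (u t x) - Hfun δ (u t₀ x)|)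
        ≤ (t - t₀)⁻¹ * (φ (x 0) ^ 2 * (m * |C| * (t - t₀))) := by gcongr
      _ = m * |C| * φ (x 0) ^ 2 := by field_simp
  have hlim : ∀ x ∈ strip Ω₀, Tendsto (fun t => f t x) (nhdsWithin t₀ (Ioi t₀))
      (nhds (hfun δ (u t₀ x) * Lop a b c (u t₀) x * φ (x 0) ^ 2)) := by
    intro x hx
    have h1 : HasDerivAt (fun s => u s x) (Lop a b c (u t₀) x) t₀ :=
      (hu.pde t₀ ht₀.le x hx).hasDerivAt (Iic_mem_nhds ht₀)
    have h2 : HasDerivAt (fun s => φ (x 0) ^ 2 * Hfun δ (u s x))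
        (φ (x 0) ^ 2 * (hfun δ (u t₀ x) * Lop a b c (u t₀) x)) t₀ :=
      ((Hfun_deriv hδ (u t₀ x)).comp t₀ h1).const_mul _
    have h3 := (hasDerivWithinAt_iff_tendsto_slope' (s := Ioi t₀) (by simp)).1
      h2.hasDerivWithinAt
    rw [mul_comm]
    refine h3.congr' ?_
    filter_upwards [hnear] with t ht
    simp only [f, min_eq_left (ht.2.trans_le (min_le_left _ _)).le]
    rw [slope_def_field, div_eq_inv_mul]
  have hae : ∀ᵐ x ∂(volume.restrict (strip Ω₀)), Tendsto (fun t => f t x)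
      (nhdsWithin t₀ (Ioi t₀))
      (nhds (hfun δ (u t₀ x) * Lop a b c (u t₀) x * φ (x 0) ^ 2)) := by
    filter_upwards [ae_restrict_mem hU.measurableSet] with x hx using hlim x hx
  have hbi : IntegrableOn (fun x : Fin (n + 1) → ℝ => m * |C| * φ (x 0) ^ 2) (strip Ω₀) :=
    integrableOn_strip hΩ hb (R := R)
      ((hφ2.comp (continuous_apply 0)).const_mul _).continuousOn fun x hx => by simp [hφR _ hx]
  constructor
  · refine Integrable.mono' hbi
      (aestronglyMeasurable_of_tendsto_ae (nhdsWithin t₀ (Ioi t₀))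
        (fun t => (hfint t).aestronglyMeasurable) hae) ?_
    filter_upwards [ae_restrict_mem hU.measurableSet] with x hx
    exact le_of_tendsto (hlim x hx).norm (hbd.mono fun t ht => ht x hx)
  · rw [hasDerivWithinAt_iff_tendsto_slope, Ici_sdiff_left]
    have hD := tendsto_integral_filter_of_dominated_convergence (μ := volume.restrict (strip Ω₀))
      (l := nhdsWithin t₀ (Ioi t₀)) (F := f) (fun x => m * |C| * φ (x 0) ^ 2)
      (Eventually.of_forall fun t => (hfint t).aestronglyMeasurable)
      (hbd.mono fun t ht => by
        filter_upwards [ae_restrict_mem hU.measurableSet] with x hx using ht x hx) hbi hae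
    refine hD.congr' ?_
    filter_upwards [hnear] with t ht
    have ht0 : t ≤ 0 := (ht.2.trans_le (min_le_left _ _)).le
    simp only [f, min_eq_left ht0]
    rw [slope_def_field, integral_const_mul, integral_sub
      (weighted_integrableOn hΩ hb hu hφ2 (Hfun_cont hδ) hφ2R ht0)
      (weighted_integrableOn hΩ hb hu hφ2 (Hfun_cont hδ) hφ2R ht₀.le), div_eq_inv_mul]

/-- A differential inequality for right derivatives, in integrated form. -/
theorem le_add_integral_of_right_deriv {E E' r : ℝ → ℝ} {s : ℝ} (hs : s ≤ 0)
    (hE : ContinuousOn E (Icc s 0))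
    (hE' : ∀ t ∈ Ico s 0, HasDerivWithinAt E (E' t) (Ici t) t)
    (hr : ContinuousOn r (Icc s 0)) (hle : ∀ t ∈ Ico s 0, E' t ≤ r t) :
    E 0 ≤ E s + ∫ t in s..0, r t := by
  let r' : ℝ → ℝ := fun t => r (max s (min t 0))
  have hr' : Continuous r' :=
    hr.comp_continuous (by fun_prop) fun t => ⟨le_max_left _ _, max_le hs (min_le_right _ _)⟩
  have heq : ∀ t ∈ Icc s 0, r' t = r t := fun t ht => by
    simp only [r']; rw [min_eq_left ht.2, max_eq_right ht.1]
  have hd : ∀ t, HasDerivAt (fun t => E s + ∫ τ in s..t, r' τ) (r' t) t := fun t =>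
    (intervalIntegral.integral_hasDerivAt_right (hr'.intervalIntegrable _ _)
      (hr'.stronglyMeasurableAtFilter _ _) hr'.continuousAt).const_add _
  have := image_le_of_deriv_right_le_deriv_boundary hE hE' (B := fun t => E s + ∫ τ in s..t, r' τ)
    (B' := r') (by simp) (fun t _ => (hd t).continuousAt.continuousWithinAt)
    (fun t _ => (hd t).hasDerivWithinAt)
    (fun t ht => (hle t ht).trans (heq t ⟨ht.1, ht.2.le⟩).ge) (right_mem_Icc.2 hs)
  refine this.trans (le_of_eq ?_)
  rw [intervalIntegral.integral_congr (g := r)]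
  intro t ht
  rw [uIcc_of_le hs] at ht
  exact heq t ht

/-- Integration over `[s, 0]` of the energy inequality for `Hfun δ (u)`, followed by `δ → 0`. -/
theorem energy_integrated {n : ℕ} {Ω₀ : Set (Fin n → ℝ)} (hΩ : IsOpen Ω₀)
    (hb : Bornology.IsBounded Ω₀) {V₀ ρ : ℝ} (hV : 0 < V₀) (hρ : 0 < ρ) (hρV : ρ ^ n = 2 * V₀)
    (hvol : volume Ω₀ = ENNReal.ofReal V₀) {lam Lam : ℝ}
    (hlam : 0 < lam) {a : (Fin (n + 1) → ℝ) → Fin (n + 1) → Fin (n + 1) → ℝ}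
    {b : (Fin (n + 1) → ℝ) → Fin (n + 1) → ℝ} {c : (Fin (n + 1) → ℝ) → ℝ}
    (hg : GoodCoeffs Ω₀ lam Lam a b c) {ε : ℝ} (hε : 0 ≤ ε) (hs : Smallness Ω₀ b c ε)
    {κ : ℝ} (hκ0 : 0 ≤ κ) (hκ : κ * (2 * (n * ρ ^ 2)) ≤ lam / 2)
    (hεκ : ε * ((n + 1) / lam + 1) ≤ κ / 8)
    {u : ℝ → (Fin (n + 1) → ℝ) → ℝ} (hu : IsAncientSolution Ω₀ a b c u)
    {φ : ℝ → ℝ} (hφ : ContDiff ℝ 1 φ) {R : ℝ} (hφR : ∀ s, R < |s| → φ s = 0)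
    (hdφR : ∀ s, R < |s| → deriv φ s = 0)
    {s : ℝ} (hs0 : s ≤ 0) :
    κ / 8 * ∫ t in s..0, ∫ x in strip Ω₀, φ (x 0) ^ 2 * u t x ^ 2 ≤
      (∫ x in strip Ω₀, φ (x 0) ^ 2 * u s x ^ 2)
      + 4 * (n + 1) * Lam ^ 2 / lam *
        ∫ t in s..0, ∫ x in strip Ω₀, deriv φ (x 0) ^ 2 * u t x ^ 2 := by
  have hφc := hφ.continuous
  have hdφ : Continuous (deriv φ) := hφ.continuous_deriv (by norm_num)
  have hφ2 : Continuous fun s => φ s ^ 2 := hφc.pow 2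
  have hφ2R : ∀ s, R < |s| → φ s ^ 2 = 0 := fun s hs => by simp [hφR s hs]
  have hdφ2R : ∀ s, R < |s| → deriv φ s ^ 2 = 0 := fun s hs => by simp [hdφR s hs]
  have hsq : Continuous fun z : ℝ => z ^ 2 := by fun_prop
  have hA := weighted_continuousOn hΩ hb hu hφ2 hsq hφ2R s
  have hB := weighted_continuousOn hΩ hb hu (hdφ.pow 2) hsq hdφ2R s
  set A : ℝ → ℝ := fun t => ∫ x in strip Ω₀, φ (x 0) ^ 2 * u t x ^ 2 with hAdef
  set B : ℝ → ℝ := fun t => ∫ x in strip Ω₀, deriv φ (x 0) ^ 2 * u t x ^ 2 with hBdef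
  set C₂ : ℝ := 4 * (n + 1) * Lam ^ 2 / lam
  set J : ℝ := ∫ x in strip Ω₀, φ (x 0) ^ 2 with hJ
  have hJ0 : 0 ≤ J := integral_nonneg fun x => sq_nonneg _
  have main : ∀ δ : ℝ, 0 < δ →
      κ / 8 * (∫ t in s..0, A t) ≤ A s + C₂ * (∫ t in s..0, B t) + δ ^ 2 * (2 * κ * J * -s) := by
    intro δ hδ
    have hcE := weighted_continuousOn hΩ hb hu hφ2 (Hfun_cont hδ) hφ2R s
    have h1 := le_add_integral_of_right_deriv hs0 hcE
      (fun t ht => (energy_hasDeriv hΩ hb hlam hg hu hφc hφR hδ ht.2).2)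
      (r := fun t => -(κ / 8) * A t + C₂ * B t + δ ^ 2 * (2 * κ * J))
      (((continuousOn_const.mul hA).add (continuousOn_const.mul hB)).add continuousOn_const)
      (fun t ht => fixed_time hΩ hb hV hρ hρV hvol hlam hg hε hs hκ0 hκ hεκ
        (hu.space_reg t ht.2.le) (slice_continuousOn hu ht.2.le) (hu.bdry t ht.2.le) hφ hφR hδ
        (energy_hasDeriv hΩ hb hlam hg hu hφc hφR hδ ht.2).1)
    have h2 : 0 ≤ ∫ x in strip Ω₀, φ (x 0) ^ 2 * Hfun δ (u 0 x) :=
      integral_nonneg fun x => mul_nonneg (sq_nonneg _) (Hfun_bounds hδ _).1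
    have h3 : ∫ x in strip Ω₀, φ (x 0) ^ 2 * Hfun δ (u s x) ≤ A s :=
      integral_mono (weighted_integrableOn hΩ hb hu hφ2 (Hfun_cont hδ) hφ2R hs0)
        (weighted_integrableOn hΩ hb hu hφ2 hsq hφ2R hs0)
        fun x => mul_le_mul_of_nonneg_left (Hfun_bounds hδ _).2 (sq_nonneg _)
    have iA : IntervalIntegrable A volume s 0 := (hA.mono (uIcc_of_le hs0).le).intervalIntegrable
    have iB : IntervalIntegrable B volume s 0 := (hB.mono (uIcc_of_le hs0).le).intervalIntegrable
    rw [intervalIntegral.integral_add ((iA.const_mul _).add (iB.const_mul _)) (by simp),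
      intervalIntegral.integral_add (iA.const_mul _) (iB.const_mul _),
      intervalIntegral.integral_const_mul, intervalIntegral.integral_const_mul,
      intervalIntegral.integral_const, smul_eq_mul] at h1
    linarith
  refine le_of_forall_pos_le_add fun e he => ?_
  set Z := 2 * κ * J * -s with hZ
  have hZ0 : 0 ≤ Z := mul_nonneg (by positivity) (by linarith)
  have := main (Real.sqrt (e / (Z + 1))) (Real.sqrt_pos.2 (by positivity))
  rw [Real.sq_sqrt (by positivity)] at this
  have h4 : e / (Z + 1) * Z ≤ e := by
    rw [div_mul_eq_mul_div, div_le_iff₀ (by positivity)]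
    nlinarith
  linarith

/-! ### The growth estimate -/

theorem exists_deriv_smoothTransition_bound :
    ∃ M, 0 ≤ M ∧ ∀ x, |deriv Real.smoothTransition x| ≤ M := by
  have hc : Continuous (deriv Real.smoothTransition) :=
    (Real.smoothTransition.contDiff (n := 1)).continuous_deriv (by norm_num)
  obtain ⟨M, hM⟩ := (isCompact_Icc (a := (0 : ℝ)) (b := 1)).exists_bound_of_continuousOn
    hc.continuousOn
  refine ⟨max M 0, le_max_right _ _, fun x => ?_⟩
  by_cases hx : x ∈ Icc (0 : ℝ) 1
  · exact (hM x hx).trans (le_max_left _ _)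
  · have h0 : deriv Real.smoothTransition x = 0 := by
      rcases not_and_or.1 hx with h | h
      · have : Real.smoothTransition =ᶠ[nhds x] fun _ => 0 := by
          filter_upwards [Iio_mem_nhds (not_le.1 h)] with y hy
          exact Real.smoothTransition.zero_of_nonpos (le_of_lt hy)
        rw [this.deriv_eq]; simp
      · have : Real.smoothTransition =ᶠ[nhds x] fun _ => 1 := by
          filter_upwards [Ioi_mem_nhds (not_le.1 h)] with y hy
          exact Real.smoothTransition.one_of_one_le (le_of_lt hy)
        rw [this.deriv_eq]; simp
    simp [h0]

/-- Cutoff functions with gradient of size `M / r₀`, with `M` universal. -/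
theorem exists_axial_cutoff : ∃ M, 0 ≤ M ∧ ∀ r r₀ : ℝ, 0 < r → 0 < r₀ → ∃ φ : ℝ → ℝ,
    ContDiff ℝ 1 φ ∧ (∀ s, |s| ≤ r → φ s = 1) ∧ (∀ s, r + r₀ ≤ |s| → φ s = 0) ∧
    (∀ s, r + r₀ ≤ |s| → deriv φ s = 0) ∧ (∀ s, φ s ^ 2 ≤ 1) ∧
    ∀ s, deriv φ s ^ 2 ≤ (M / r₀) ^ 2 := by
  obtain ⟨M, hM0, hM⟩ := exists_deriv_smoothTransition_bound
  refine ⟨2 * M, by positivity, fun r r₀ hr hr₀ => ?_⟩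
  let T := Real.smoothTransition
  have hT : ContDiff ℝ 1 T := Real.smoothTransition.contDiff
  let φ : ℝ → ℝ := fun s => T (1 - (s - r) / r₀) * T (1 - (-s - r) / r₀)
  have hφ : ContDiff ℝ 1 φ := (hT.comp (by fun_prop)).mul (hT.comp (by fun_prop))
  have h0 : ∀ s, 0 ≤ φ s := fun s =>
    mul_nonneg (Real.smoothTransition.nonneg _) (Real.smoothTransition.nonneg _)
  have h1 : ∀ s, φ s ≤ 1 := fun s =>
    mul_le_one₀ (Real.smoothTransition.le_one _) (Real.smoothTransition.nonneg _)
      (Real.smoothTransition.le_one _)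
  have hz : ∀ s, r + r₀ ≤ |s| → φ s = 0 := by
    intro s hs
    rcases le_abs.1 hs with h | h
    · have : T (1 - (s - r) / r₀) = 0 := Real.smoothTransition.zero_of_nonpos (by
        rw [sub_nonpos, le_div_iff₀ hr₀]; linarith)
      simp [φ, this]
    · have : T (1 - (-s - r) / r₀) = 0 := Real.smoothTransition.zero_of_nonpos (by
        rw [sub_nonpos, le_div_iff₀ hr₀]; linarith)
      simp [φ, this]
  refine ⟨φ, hφ, fun s hs => ?_, hz, fun s hs => ?_, fun s => ?_, fun s => ?_⟩
  · have hs' := abs_le.1 hs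
    have e1 : T (1 - (s - r) / r₀) = 1 := Real.smoothTransition.one_of_one_le (by
      have : (s - r) / r₀ ≤ 0 := div_nonpos_of_nonpos_of_nonneg (by linarith) hr₀.le
      linarith)
    have e2 : T (1 - (-s - r) / r₀) = 1 := Real.smoothTransition.one_of_one_le (by
      have : (-s - r) / r₀ ≤ 0 := div_nonpos_of_nonpos_of_nonneg (by linarith) hr₀.le
      linarith)
    simp [φ, e1, e2]
  · -- a zero of the nonnegative function `φ` is a minimum
    refine IsLocalMin.deriv_eq_zero (Eventually.of_forall fun y => ?_)
    rw [hz s hs]; exact h0 y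
  · exact pow_le_one₀ (h0 s) (h1 s)
  · have hTd : ∀ y, HasDerivAt T (deriv T y) y := fun y =>
      (hT.differentiable (by norm_num) y).hasDerivAt
    have d1 : HasDerivAt (fun s => T (1 - (s - r) / r₀))
        (deriv T (1 - (s - r) / r₀) * (-(1 / r₀))) s := by
      refine (hTd _).comp s ?_
      exact ((((hasDerivAt_id s).sub_const r).div_const r₀).const_sub 1)
    have d2 : HasDerivAt (fun s => T (1 - (-s - r) / r₀))
        (deriv T (1 - (-s - r) / r₀) * (-(-1 / r₀))) s := by
      refine (hTd _).comp s ?_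
      exact (((((hasDerivAt_id s).neg).sub_const r).div_const r₀).const_sub 1)
    have d3 : deriv φ s = _ := (d1.mul d2).deriv
    have hTabs : ∀ y, |T y| ≤ 1 := fun y => by
      rw [abs_of_nonneg (Real.smoothTransition.nonneg y)]
      exact Real.smoothTransition.le_one y
    have hi : |1 / r₀| = 1 / r₀ := abs_of_pos (by positivity)
    have hd : |deriv φ s| ≤ 2 * M / r₀ := by
      rw [d3]
      refine (abs_add_le _ _).trans ?_
      have a1 : |deriv T (1 - (s - r) / r₀) * (-(1 / r₀)) * T (1 - (-s - r) / r₀)|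
          ≤ M * (1 / r₀) * 1 := by
        rw [abs_mul, abs_mul, abs_neg, hi]
        gcongr
        · exact hM _
        · exact hTabs _
      have a2 : |T (1 - (s - r) / r₀) * (deriv T (1 - (-s - r) / r₀) * (-(-1 / r₀)))|
          ≤ 1 * (M * (1 / r₀)) := by
        rw [abs_mul, abs_mul, abs_neg, neg_div, abs_neg, hi]
        gcongr
        · exact hTabs _
        · exact hM _
      calc _ ≤ M * (1 / r₀) * 1 + 1 * (M * (1 / r₀)) := add_le_add a1 a2
        _ = 2 * M / r₀ := by ring
    rw [← sq_abs]
    exact pow_le_pow_left₀ (abs_nonneg _) hd 2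

theorem Dset_isOpen {n : ℕ} {Ω₀ : Set (Fin n → ℝ)} (hΩ : IsOpen Ω₀) (r : ℝ) :
    IsOpen (Dset Ω₀ r) :=
  (isOpen_Ioo.preimage (continuous_apply (0 : Fin (n + 1)))).inter (strip_isOpen hΩ)

/-- The space-time integral over `Q_r` as an iterated integral. -/
theorem Qset_integral {n : ℕ} {Ω₀ : Set (Fin n → ℝ)} (hΩ : IsOpen Ω₀)
    (hb : Bornology.IsBounded Ω₀) {a : (Fin (n + 1) → ℝ) → Fin (n + 1) → Fin (n + 1) → ℝ}
    {b : (Fin (n + 1) → ℝ) → Fin (n + 1) → ℝ} {c : (Fin (n + 1) → ℝ) → ℝ}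
    {u : ℝ → (Fin (n + 1) → ℝ) → ℝ} (hu : IsAncientSolution Ω₀ a b c u) (r : ℝ) :
    IntervalIntegrable (fun t => ∫ x in Dset Ω₀ r, u t x ^ 2) volume (-r ^ 2) 0 ∧
    ∫ p in Qset Ω₀ r, u p.1 p.2 ^ 2 = ∫ t in (-r ^ 2)..0, ∫ x in Dset Ω₀ r, u t x ^ 2 := by
  have hle : -r ^ 2 ≤ 0 := by nlinarith [sq_nonneg r]
  have hint : IntegrableOn (fun p : ℝ × (Fin (n + 1) → ℝ) => u p.1 p.2 ^ 2) (Qset Ω₀ r) := by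
    refine integrableOn_of_continuousOn_compact
      (measurableSet_Ioc.prod (Dset_isOpen hΩ r).measurableSet)
      ((isCompact_Icc (a := -r ^ 2) (b := 0)).prod (isCompact_slab hb r))
      ((hu.cont.mono (prod_mono (fun t ht => ht.2) fun x hx => hx.1)).pow 2) ?_
    rintro ⟨t, x⟩ ⟨ht, hx⟩ hK
    refine absurd ⟨⟨ht.1.le, ht.2⟩, subset_closure hx.2, ?_⟩ hK
    exact abs_le.2 ⟨hx.1.1.le, hx.1.2.le⟩
  unfold Qset at hint ⊢
  constructor
  · rw [intervalIntegrable_iff_integrableOn_Ioc_of_le hle]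
    rw [IntegrableOn, Measure.volume_eq_prod, ← Measure.prod_restrict] at hint
    exact hint.integral_prod_left
  · rw [Measure.volume_eq_prod] at hint ⊢
    rw [setIntegral_prod _ hint, intervalIntegral.integral_of_le hle]

/-- One step of the iteration: the integrated energy inequality, averaged over the initial time. -/
theorem one_step {n : ℕ} {Ω₀ : Set (Fin n → ℝ)} (hΩ : IsOpen Ω₀)
    (hb : Bornology.IsBounded Ω₀) {V₀ ρ : ℝ} (hV : 0 < V₀) (hρ : 0 < ρ) (hρV : ρ ^ n = 2 * V₀)
    (hvol : volume Ω₀ = ENNReal.ofReal V₀) {lam Lam : ℝ}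
    (hlam : 0 < lam) {a : (Fin (n + 1) → ℝ) → Fin (n + 1) → Fin (n + 1) → ℝ}
    {b : (Fin (n + 1) → ℝ) → Fin (n + 1) → ℝ} {c : (Fin (n + 1) → ℝ) → ℝ}
    (hg : GoodCoeffs Ω₀ lam Lam a b c) {ε : ℝ} (hε : 0 ≤ ε) (hs : Smallness Ω₀ b c ε)
    {κ : ℝ} (hκ0 : 0 < κ) (hκ : κ * (2 * (n * ρ ^ 2)) ≤ lam / 2)
    (hεκ : ε * ((n + 1) / lam + 1) ≤ κ / 8)
    {u : ℝ → (Fin (n + 1) → ℝ) → ℝ} (hu : IsAncientSolution Ω₀ a b c u)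
    {M r r₀ : ℝ} {φ : ℝ → ℝ} (hφ : ContDiff ℝ 1 φ) (hφ1 : ∀ s, |s| ≤ r → φ s = 1)
    (hφ0 : ∀ s, r + r₀ ≤ |s| → φ s = 0) (hdφ0 : ∀ s, r + r₀ ≤ |s| → deriv φ s = 0)
    (hφle : ∀ s, φ s ^ 2 ≤ 1) (hdφ : ∀ s, deriv φ s ^ 2 ≤ (M / r₀) ^ 2)
    (hr : 1 < r) (hr₀ : 1 ≤ r₀)
    (hr₀' : 8 * Real.exp 1 * (1 + 4 * (n + 1) * Lam ^ 2 / lam * M ^ 2) / κ ≤ r₀) :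
    Real.exp 1 * ∫ p in Qset Ω₀ r, u p.1 p.2 ^ 2 ≤ ∫ p in Qset Ω₀ (r + r₀), u p.1 p.2 ^ 2 := by
  have hU := strip_isOpen hΩ
  set R := r + r₀ with hR
  obtain ⟨iw, eqw⟩ := Qset_integral hΩ hb hu r
  obtain ⟨iW, eqW⟩ := Qset_integral hΩ hb hu R
  set I₀ := ∫ p in Qset Ω₀ r, u p.1 p.2 ^ 2
  set I₁ := ∫ p in Qset Ω₀ R, u p.1 p.2 ^ 2
  set w : ℝ → ℝ := fun t => ∫ x in Dset Ω₀ r, u t x ^ 2 with hw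
  set W : ℝ → ℝ := fun t => ∫ x in Dset Ω₀ R, u t x ^ 2 with hW
  set A : ℝ → ℝ := fun t => ∫ x in strip Ω₀, φ (x 0) ^ 2 * u t x ^ 2 with hA
  set B : ℝ → ℝ := fun t => ∫ x in strip Ω₀, deriv φ (x 0) ^ 2 * u t x ^ 2 with hB
  set C₂ : ℝ := 4 * (n + 1) * Lam ^ 2 / lam with hC₂
  have hC₂0 : 0 ≤ C₂ := by positivity
  have hφ2 : Continuous fun s => φ s ^ 2 := hφ.continuous.pow 2
  have hdφ2 : Continuous fun s => deriv φ s ^ 2 := (hφ.continuous_deriv (by norm_num)).pow 2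
  have hφ2R : ∀ s, R < |s| → φ s ^ 2 = 0 := fun s hs => by simp [hφ0 s hs.le]
  have hdφ2R : ∀ s, R < |s| → deriv φ s ^ 2 = 0 := fun s hs => by simp [hdφ0 s hs.le]
  have hsq : Continuous fun z : ℝ => z ^ 2 := by fun_prop
  have hDsub : ∀ q, Dset Ω₀ q ⊆ strip Ω₀ := fun q x hx => hx.2
  have iD : ∀ t ≤ 0, IntegrableOn (fun x => u t x ^ 2) (Dset Ω₀ R) := by
    intro t ht
    refine integrableOn_of_continuousOn_compact (Dset_isOpen hΩ R).measurableSet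
      (isCompact_slab hb R) (((slice_continuousOn hu ht).mono fun x hx => hx.1).pow 2) ?_
    exact fun x hx hK => absurd ⟨subset_closure hx.2, abs_le.2 ⟨hx.1.1.le, hx.1.2.le⟩⟩ hK
  have hout : ∀ x ∈ strip Ω₀ \ Dset Ω₀ R, R ≤ |x 0| := by
    intro x hx
    by_contra h
    exact hx.2 ⟨abs_lt.1 (not_le.1 h), hx.1⟩
  -- comparison of the weighted integrals with integrals over `D_r` and `D_R`
  have wA : ∀ t ≤ 0, w t ≤ A t := by
    intro t ht
    have h1 : w t = ∫ x in Dset Ω₀ r, φ (x 0) ^ 2 * u t x ^ 2 := by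
      refine setIntegral_congr_fun (Dset_isOpen hΩ r).measurableSet fun x hx => ?_
      simp [hφ1 (x 0) (abs_le.2 ⟨hx.1.1.le, hx.1.2.le⟩)]
    rw [h1]
    exact setIntegral_mono_set (weighted_integrableOn hΩ hb hu hφ2 hsq hφ2R ht)
      (ae_of_all _ fun x => by positivity) (hDsub r).eventuallyLE
  have AW : ∀ t ≤ 0, A t ≤ W t := by
    intro t ht
    have h1 : A t = ∫ x in Dset Ω₀ R, φ (x 0) ^ 2 * u t x ^ 2 :=
      setIntegral_eq_of_subset_of_forall_sdiff_eq_zero hU.measurableSet (hDsub R)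
        fun x hx => by simp [hφ0 _ (hout x hx)]
    rw [h1]
    refine setIntegral_mono ((weighted_integrableOn hΩ hb hu hφ2 hsq hφ2R ht).mono_set (hDsub R))
      (iD t ht) fun x => ?_
    exact mul_le_of_le_one_left (sq_nonneg _) (hφle _)
  have BW : ∀ t ≤ 0, B t ≤ (M / r₀) ^ 2 * W t := by
    intro t ht
    have h1 : B t = ∫ x in Dset Ω₀ R, deriv φ (x 0) ^ 2 * u t x ^ 2 :=
      setIntegral_eq_of_subset_of_forall_sdiff_eq_zero hU.measurableSet (hDsub R)
        fun x hx => by simp [hdφ0 _ (hout x hx)]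
    rw [h1, hW, ← integral_const_mul]
    refine setIntegral_mono ((weighted_integrableOn hΩ hb hu hdφ2 hsq hdφ2R ht).mono_set (hDsub R))
      ((iD t ht).const_mul _) fun x => ?_
    exact mul_le_mul_of_nonneg_right (hdφ _) (sq_nonneg _)
  have W0 : ∀ t, 0 ≤ W t := fun t => integral_nonneg fun x => sq_nonneg _
  have A0 : ∀ t, 0 ≤ A t := fun t => integral_nonneg fun x => by positivity
  have B0 : ∀ t, 0 ≤ B t := fun t => integral_nonneg fun x => by positivity
  have hrR : r ^ 2 + r₀ ≤ R ^ 2 := by rw [hR]; nlinarith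
  have hr2 : 0 ≤ r ^ 2 := sq_nonneg r
  have cA : ContinuousOn A (Icc (-R ^ 2) 0) :=
    weighted_continuousOn hΩ hb hu hφ2 hsq hφ2R (-R ^ 2)
  have cB : ContinuousOn B (Icc (-R ^ 2) 0) :=
    weighted_continuousOn hΩ hb hu hdφ2 hsq hdφ2R (-R ^ 2)
  have iA : ∀ x y, -R ^ 2 ≤ x → x ≤ y → y ≤ 0 → IntervalIntegrable A volume x y := by
    intro x y hx hxy hy
    refine (cA.mono ?_).intervalIntegrable
    rw [uIcc_of_le hxy]; exact Icc_subset_Icc hx hy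
  have iB : ∀ x y, -R ^ 2 ≤ x → x ≤ y → y ≤ 0 → IntervalIntegrable B volume x y := by
    intro x y hx hxy hy
    refine (cB.mono ?_).intervalIntegrable
    rw [uIcc_of_le hxy]; exact Icc_subset_Icc hx hy
  have hBtot : ∫ t in (-R ^ 2)..0, B t ≤ (M / r₀) ^ 2 * I₁ := by
    rw [eqW, ← intervalIntegral.integral_const_mul]
    exact intervalIntegral.integral_mono_on (by linarith) (iB _ _ le_rfl (by linarith) le_rfl)
      (iW.const_mul _) fun t ht => BW t ht.2
  have step : ∀ s ∈ Icc (-R ^ 2) (-r ^ 2), κ / 8 * I₀ ≤ W s + C₂ * ((M / r₀) ^ 2 * I₁) := by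
    intro s ⟨hs1, hs2⟩
    have hs0 : s ≤ 0 := by linarith
    have e1 := energy_integrated hΩ hb hV hρ hρV hvol hlam hg hε hs hκ0.le hκ hεκ hu hφ
      (fun s hs => hφ0 s hs.le) (fun s (hs : R < |s|) => hdφ0 s hs.le) hs0
    change κ / 8 * (∫ t in s..0, A t) ≤ A s + C₂ * ∫ t in s..0, B t at e1
    have e2 : I₀ ≤ ∫ t in s..0, A t := by
      rw [eqw, ← intervalIntegral.integral_add_adjacent_intervals
        (iA s (-r ^ 2) hs1 hs2 (by linarith)) (iA (-r ^ 2) 0 (by linarith) (by linarith) le_rfl)]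
      have f1 : 0 ≤ ∫ t in s..(-r ^ 2), A t :=
        intervalIntegral.integral_nonneg hs2 fun t _ => A0 t
      have f2 : ∫ t in (-r ^ 2)..0, w t ≤ ∫ t in (-r ^ 2)..0, A t :=
        intervalIntegral.integral_mono_on (by linarith) iw
          (iA (-r ^ 2) 0 (by linarith) (by linarith) le_rfl) fun t ht => wA t ht.2
      linarith
    have e3 : ∫ t in s..0, B t ≤ (M / r₀) ^ 2 * I₁ := by
      refine le_trans ?_ hBtot
      rw [← intervalIntegral.integral_add_adjacent_intervals
        (iB (-R ^ 2) s le_rfl hs1 hs0) (iB s 0 hs1 hs0 le_rfl)]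
      have f1 : 0 ≤ ∫ t in (-R ^ 2)..s, B t :=
        intervalIntegral.integral_nonneg hs1 fun t _ => B0 t
      linarith
    have e4 := mul_le_mul_of_nonneg_left e2 (show 0 ≤ κ / 8 by positivity)
    have e5 := mul_le_mul_of_nonneg_left e3 hC₂0
    linarith [AW s hs0]
  -- average over the initial time `s`
  have iW1 : IntervalIntegrable W volume (-R ^ 2) (-r ^ 2) := iW.mono_set (by
    rw [uIcc_of_le (by linarith), uIcc_of_le (by linarith)]
    exact Icc_subset_Icc le_rfl (by linarith))
  have iW2 : IntervalIntegrable W volume (-r ^ 2) 0 := iW.mono_set (by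
    rw [uIcc_of_le (by linarith), uIcc_of_le (by linarith)]
    exact Icc_subset_Icc (by linarith) le_rfl)
  have avg := intervalIntegral.integral_mono_on (μ := volume) (show -R ^ 2 ≤ -r ^ 2 by linarith)
    (f := fun _ => κ / 8 * I₀) (by simp) (iW1.add intervalIntegrable_const) step
  rw [intervalIntegral.integral_add iW1 intervalIntegrable_const, intervalIntegral.integral_const,
    intervalIntegral.integral_const, smul_eq_mul, smul_eq_mul] at avg
  have hWle : ∫ t in (-R ^ 2)..(-r ^ 2), W t ≤ I₁ := by
    rw [eqW, ← intervalIntegral.integral_add_adjacent_intervals iW1 iW2]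
    have : 0 ≤ ∫ t in (-r ^ 2)..0, W t :=
      intervalIntegral.integral_nonneg (by linarith) fun t _ => W0 t
    linarith
  have hI₁ : 0 ≤ I₁ := integral_nonneg fun p => sq_nonneg _
  have hr₀pos : 0 < r₀ := by linarith
  set L := -r ^ 2 - -R ^ 2 with hL
  have hLr : r₀ ≤ L := by rw [hL]; linarith
  have hLpos : 0 < L := by linarith
  -- divide by the length `L ≥ r₀` of the time interval
  have g1 : κ / 8 * I₀ ≤ I₁ / L + C₂ * ((M / r₀) ^ 2 * I₁) := by
    have : L * (κ / 8 * I₀) ≤ L * (I₁ / L + C₂ * ((M / r₀) ^ 2 * I₁)) := by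
      have : L * (I₁ / L) = I₁ := by field_simp
      linarith
    exact le_of_mul_le_mul_left this hLpos
  have g2 : I₁ / L ≤ I₁ / r₀ := div_le_div_of_nonneg_left hI₁ hr₀pos hLr
  have g3 : C₂ * ((M / r₀) ^ 2 * I₁) ≤ C₂ * M ^ 2 * I₁ / r₀ := by
    have : C₂ * ((M / r₀) ^ 2 * I₁) = C₂ * M ^ 2 * I₁ / r₀ / r₀ := by field_simp
    rw [this]
    exact div_le_self (by positivity) hr₀
  have g4 : κ / 8 * I₀ * r₀ ≤ (1 + C₂ * M ^ 2) * I₁ := by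
    have : κ / 8 * I₀ ≤ (1 + C₂ * M ^ 2) * I₁ / r₀ := by
      have : (1 + C₂ * M ^ 2) * I₁ / r₀ = I₁ / r₀ + C₂ * M ^ 2 * I₁ / r₀ := by ring
      linarith
    rwa [le_div_iff₀ hr₀pos] at this
  have hI₀ : 0 ≤ I₀ := integral_nonneg fun p => sq_nonneg _
  rw [div_le_iff₀ hκ0] at hr₀'
  have g5 := mul_le_mul_of_nonneg_right hr₀' hI₀
  have hpos : 0 < 1 + C₂ * M ^ 2 := by positivity
  refine le_of_mul_le_mul_left ?_ hpos
  linarith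

/-- Iterated growth estimate: `∫_{Q_{r+k r₀}} u² ≥ eᵏ ∫_{Q_r} u²`. -/
theorem exponential_growth_iteration
    (n : ℕ) (hn : 1 ≤ n) (lam V₀ : ℝ) (hlam : 0 < lam) (hV₀ : 0 < V₀) :
    ∃ ε₀ > (0 : ℝ), ∀ Lam : ℝ, lam < Lam →
    ∃ r₀ > (0 : ℝ), ∀ Ω₀ : Set (Fin n → ℝ), IsOpen Ω₀ → Ω₀.Nonempty →
      Bornology.IsBounded Ω₀ → volume Ω₀ = ENNReal.ofReal V₀ →
    ∀ a b c, GoodCoeffs Ω₀ lam Lam a b c → Smallness Ω₀ b c ε₀ →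
    ∀ u : ℝ → (Fin (n + 1) → ℝ) → ℝ, IsAncientSolution Ω₀ a b c u →
    ∀ r : ℝ, 1 < r → ∀ k : ℕ, 0 < k →
      Real.exp k * ∫ p in Qset Ω₀ r, u p.1 p.2 ^ 2 ≤
        ∫ p in Qset Ω₀ (r + k * r₀), u p.1 p.2 ^ 2 := by
  have hn0 : (0 : ℝ) < n := by exact_mod_cast hn
  set ρ : ℝ := (2 * V₀) ^ ((n : ℝ)⁻¹) with hρdef
  have hρ : 0 < ρ := by positivity
  have hρV : ρ ^ n = 2 * V₀ := Real.rpow_inv_natCast_pow (by positivity) (by omega)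
  set κ : ℝ := lam / 2 / (2 * (n * ρ ^ 2)) with hκdef
  have hκ0 : 0 < κ := by positivity
  have hκ : κ * (2 * (n * ρ ^ 2)) ≤ lam / 2 := by
    rw [hκdef, div_mul_cancel₀ _ (by positivity)]
  have hden : 0 < ((n : ℝ) + 1) / lam + 1 := by positivity
  refine ⟨κ / 8 / ((n + 1) / lam + 1), by positivity, fun Lam _ => ?_⟩
  obtain ⟨M, -, hM⟩ := exists_axial_cutoff
  set r₀ : ℝ := max 1 (8 * Real.exp 1 * (1 + 4 * (n + 1) * Lam ^ 2 / lam * M ^ 2) / κ) with hr₀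
  have hr₀1 : 1 ≤ r₀ := le_max_left _ _
  refine ⟨r₀, by linarith, ?_⟩
  intro Ω₀ hΩ _ hb hvol a b c hg hs u hu r hr k _
  have step : ∀ r : ℝ, 1 < r → Real.exp 1 * ∫ p in Qset Ω₀ r, u p.1 p.2 ^ 2 ≤
      ∫ p in Qset Ω₀ (r + r₀), u p.1 p.2 ^ 2 := by
    intro r hr
    obtain ⟨φ, h1, h2, h3, h4, h5, h6⟩ := hM r r₀ (by linarith) (by linarith)
    exact one_step hΩ hb hV₀ hρ hρV hvol hlam hg (by positivity) hs hκ0 hκ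
      (by rw [div_mul_cancel₀ _ hden.ne']) hu h1 h2 h3 h4 h5 h6 hr hr₀1 (le_max_right _ _)
  clear * - step hr hr₀1
  induction k with
  | zero => simp
  | succ k ih =>
    have h1 := step (r + k * r₀) (by nlinarith [(Nat.cast_nonneg k : (0 : ℝ) ≤ k)])
    have h2 := mul_le_mul_of_nonneg_left ih (Real.exp_pos 1).le
    have h3 : r + k * r₀ + r₀ = r + ((k + 1 : ℕ) : ℝ) * r₀ := by push_cast; ring
    rw [h3] at h1
    refine le_trans (le_of_eq ?_) (h2.trans h1)
    push_cast
    rw [Real.exp_add]; ring
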